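/- arXiv:2502.14398 — 12 statements merged into one kernel-verified Lean document; each statement's English description precedes it below -/
import Mathlib

section
/- For every integer n ≥ 1, f(n) = ⌊(n-1)²/4⌋, where f(n) is the maximal, over all labelings π of the vertices of an n-cycle, of the minimal number of adjacent swaps needed to transform π into the trivial cyclic permutation. -/
/-!
Write `K = ⌊(n - 1)² / 4⌋`, and regard `σ` as placing the label `a` at the position `σ a`.

**Upper bound.** Choose a lift `P : ZMod n → ℤ` of `σ`. This amounts to an element of the extended
affine symmetric group above `σ`, whose number of inversions is half of
`winv P = ∑ a, ∑ b, |gap P a b|` with `gap P a b = ⌊(P b - P a) / n⌋ - ⌊(b - a) / n⌋`. If two labels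
`a`, `b` at adjacent positions have `gap P a b > 0`, swapping them lowers `winv P` by two
(`winv_moved`); if no such pair exists, then the lifted labels strictly increase along the circle,
gain `n` in one turn, and hence increase by exactly one at each step, so that `σ` is a rotation
(`mem_zpowers_of_gap`). So `winv P / 2` swaps suffice (`exists_sort`).

The lift is found by averaging over the `n` lifts `cutLift σ θ`, in which all displacements lie in
`[θ, θ + n)`. For fixed `a`, `b` the gaps over all `θ` have the same sign and add up to `g - s`, where
`g` and `s` are the residues in `[0, n)` of `b - a` and `σ b - σ a` (`sum_gap_cutLift`). Since
`2 |s - g| ≤ |2 s - n| + |2 g - n|` and both residues run over `1, …, n - 1` exactly `n` times each,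
the total of `winv` is at most `n ∑ |2 x - n| = 2 n K`, so that some `θ` has `winv ≤ 2 K`.

**Lower bound.** The reversal `a ↦ -1 - a` needs `K` swaps. Let `before σ a b ∈ ZMod 2` record whether
the label `a` stands before `b` on the line obtained by cutting the circle at `0`. Up to a term
`p a + p b` caused by the cut, an adjacent swap changes `before` only at the pair of labels swapped
(`before_swap`), and a rotation has the `before` of the identity (`before_zpowers`). If `m` swaps turn
the reversal into a rotation, then the pairs swapped an odd number of times are therefore exactly the
pairs `a ≠ b` with `c a = c b` for some `c : ZMod n → ZMod 2`. The two colour classes, of sizes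
`s + t = n`, contribute `s (s - 1) / 2 + t (t - 1) / 2 ≥ K` such pairs.
-/

/-- The trivial cyclic shift `i ↦ i + 1` on `ZMod n`. -/
def trivCycle (n : ℕ) : Equiv.Perm (ZMod n) := Equiv.addRight 1

/-- A permutation of `ZMod n` is an adjacent swap if it swaps two adjacent
points `i` and `i + 1` on the circle. -/
def IsAdjacentSwap {n : ℕ} (t : Equiv.Perm (ZMod n)) : Prop :=
  ∃ i : ZMod n, t = Equiv.swap i (i + 1)

/-- The cyclic sorting distance of `π`: the minimal `m` such that there are
adjacent swaps `t_1, …, t_m` with `t_m ∘ ⋯ ∘ t_1 ∘ π` in the cyclic subgroup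
generated by the trivial cycle. -/
noncomputable def sortDist {n : ℕ} (π : Equiv.Perm (ZMod n)) : ℕ :=
  sInf {m | ∃ l : List (Equiv.Perm (ZMod n)),
    l.length = m ∧ (∀ t ∈ l, IsAdjacentSwap t) ∧
    l.prod * π ∈ Subgroup.zpowers (trivCycle n)}

/-- `f n` is the maximal cyclic sorting distance over all labelings. -/
noncomputable def f (n : ℕ) : ℕ :=
  sSup {m | ∃ π : Equiv.Perm (ZMod n), m = sortDist π}

/-! ### Sorting by removing affine inversions -/

theorem neg_ediv_of_not_dvd {n x : ℤ} (hn : 0 < n) (h : ¬ n ∣ x) : (-x) / n = -(x / n) - 1 := by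
  have h1 := Int.mul_ediv_add_emod x n
  have h2 := Int.emod_nonneg x hn.ne'
  have h3 := Int.emod_lt_of_pos x hn
  have h4 : x % n ≠ 0 := fun h0 => h (Int.dvd_of_emod_eq_zero h0)
  have h5 : -x = (n - x % n) + n * (-(x / n) - 1) := by linarith
  have h6 : 0 < x % n := by omega
  rw [h5, Int.add_mul_ediv_left _ _ hn.ne', Int.ediv_eq_zero_of_lt (by omega) (by omega)]
  ring

theorem sub_one_ediv_of_not_dvd {n x : ℤ} (hn : 0 < n) (h : ¬ n ∣ x) : (x - 1) / n = x / n := by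
  have h1 := Int.mul_ediv_add_emod x n
  have h2 := Int.emod_nonneg x hn.ne'
  have h3 := Int.emod_lt_of_pos x hn
  have h4 : x % n ≠ 0 := fun h0 => h (Int.dvd_of_emod_eq_zero h0)
  have h5 : x - 1 = (x % n - 1) + n * (x / n) := by linarith
  rw [h5, Int.add_mul_ediv_left _ _ hn.ne', Int.ediv_eq_zero_of_lt (by omega) (by omega)]
  ring

/-- For a lift `P` of the positions, the signed number of inversions, in the affine permutation sending
`a + n k` to `P a + n k`, between the residue classes of the labels `a` and `b`. -/
def gap {n : ℕ} (P : ZMod n → ℤ) (a b : ZMod n) : ℤ :=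
  (P b - P a) / n - ((b.val : ℤ) - a.val) / n

/-- Twice the number of inversions of the affine permutation with lifted positions `P`: every pair of
labels is counted in both orders. -/
def winv {n : ℕ} [NeZero n] (P : ZMod n → ℤ) : ℤ := ∑ a, ∑ b, |gap P a b|

theorem not_dvd_lift_sub {n : ℕ} {σ : Equiv.Perm (ZMod n)} {P : ZMod n → ℤ}
    (hP : ∀ a, (P a : ZMod n) = σ a) {a b : ZMod n} (hab : a ≠ b) : ¬ (n : ℤ) ∣ P b - P a := by
  rw [← ZMod.intCast_zmod_eq_zero_iff_dvd]
  push_cast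
  rw [hP, hP, sub_eq_zero]
  exact fun h => hab (σ.injective h).symm

theorem lift_val {n : ℕ} [NeZero n] (a : ZMod n) :
    (((a.val : ℕ) : ℤ) : ZMod n) = (Equiv.refl (ZMod n) : Equiv.Perm (ZMod n)) a := by simp

theorem gap_antisymm {n : ℕ} [NeZero n] {σ : Equiv.Perm (ZMod n)} {P : ZMod n → ℤ}
    (hP : ∀ a, (P a : ZMod n) = σ a) {a b : ZMod n} (hab : a ≠ b) : gap P b a = - gap P a b := by
  have hn : (0 : ℤ) < n := by exact_mod_cast NeZero.pos n
  have h1 := neg_ediv_of_not_dvd hn (not_dvd_lift_sub hP hab)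
  have h2 := neg_ediv_of_not_dvd hn
    (not_dvd_lift_sub (σ := Equiv.refl _) (P := fun a => (a.val : ℤ)) lift_val hab)
  rw [neg_sub] at h1 h2
  simp only [gap, h1, h2]
  ring

/-- The lifted positions after the labels `a` and `b` exchange their adjacent places. -/
def moved {n : ℕ} (P : ZMod n → ℤ) (a b : ZMod n) : ZMod n → ℤ :=
  fun x => if x = a then P a + 1 else if x = b then P b - 1 else P x

theorem moved_lift {n : ℕ} {σ : Equiv.Perm (ZMod n)} {P : ZMod n → ℤ}
    (hP : ∀ a, (P a : ZMod n) = σ a) {a b : ZMod n} (hσ : σ b = σ a + 1) (x : ZMod n) :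
    (moved P a b x : ZMod n) = (Equiv.swap (σ a) (σ a + 1) * σ) x := by
  rw [← hσ, Equiv.Perm.mul_apply]
  unfold moved
  split_ifs with h1 h2
  · subst h1; simp [hP, hσ]
  · subst h2; simp [hP, hσ]
  · rw [Equiv.swap_apply_of_ne_of_ne (by simpa using h1) (by simpa using h2), hP]

/-- Swapping the contents of two adjacent positions that form a descent removes an inversion,
which `winv` counts twice. -/
theorem winv_moved {n : ℕ} [NeZero n] (hn : 2 ≤ n) {σ : Equiv.Perm (ZMod n)} {P : ZMod n → ℤ}
    (hP : ∀ a, (P a : ZMod n) = σ a) {a b : ZMod n} (hσ : σ b = σ a + 1) (hg : 0 < gap P a b) :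
    winv (moved P a b) + 2 ≤ winv P := by
  have hn0 : (0 : ℤ) < n := by omega
  have : Fact (1 < n) := ⟨hn⟩
  have hab : a ≠ b := by
    rintro rfl
    simp at hσ
  have hP' := moved_lift hP hσ
  have hma : moved P a b a = P a + 1 := by simp [moved]
  have hmb : moved P a b b = P b - 1 := by simp [moved, hab.symm]
  have hmo : ∀ c, c ≠ a → c ≠ b → moved P a b c = P c := fun c h1 h2 => by simp [moved, h1, h2]
  have hgab : gap (moved P a b) a b = gap P a b - 1 := by
    have hd : (n : ℤ) ∣ P b - P a - 1 := by
      rw [← ZMod.intCast_zmod_eq_zero_iff_dvd]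
      push_cast
      rw [hP, hP, hσ]; ring
    obtain ⟨k, hk⟩ := hd
    simp only [gap, hma, hmb]
    have e1 : P b - 1 - (P a + 1) = (n - 1 : ℤ) + n * (k - 1) := by linarith
    have e2 : P b - P a = 1 + n * k := by linarith
    have e3 : ((n : ℤ) - 1) / n = 0 := Int.ediv_eq_zero_of_lt (by omega) (by omega)
    have e4 : (1 : ℤ) / n = 0 := Int.ediv_eq_zero_of_lt (by omega) (by omega)
    rw [e1, e2, Int.add_mul_ediv_left _ _ hn0.ne', Int.add_mul_ediv_left _ _ hn0.ne', e3, e4]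
    ring
  have hgba : gap (moved P a b) b a = gap P b a + 1 := by
    rw [gap_antisymm hP' hab, gap_antisymm hP hab, hgab]; ring
  -- The floors involving a third label do not change: `P c - P a` and `P c - P b + 1` are not
  -- divisible by `n`, because `c` stands at neither of the two positions.
  have hac : ∀ c, c ≠ a → c ≠ b → gap (moved P a b) a c = gap P a c := by
    intro c h1 h2
    simp only [gap, hma, hmo c h1 h2]
    rw [← sub_sub, sub_one_ediv_of_not_dvd hn0 (not_dvd_lift_sub hP h1.symm)]
  have hbc : ∀ c, c ≠ a → c ≠ b → gap (moved P a b) b c = gap P b c := by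
    intro c h1 h2
    have h3 := not_dvd_lift_sub hP' h2.symm
    rw [hmb, hmo c h1 h2] at h3
    simp only [gap, hmb, hmo c h1 h2]
    rw [← sub_one_ediv_of_not_dvd hn0 h3]
    congr 2; ring
  have key : ∀ x y, |gap (moved P a b) x y| + ((if x = a then if y = b then 1 else 0 else 0) +
      (if x = b then if y = a then 1 else 0 else 0)) ≤ |gap P x y| := by
    intro x y
    have hself : ∀ Q : ZMod n → ℤ, ∀ x, gap Q x x = 0 := by simp [gap]
    have hneg := gap_antisymm hP hab
    by_cases hxy : x = y
    · subst hxy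
      rw [hself, hself]
      split_ifs <;> simp_all
    by_cases hxa : x = a
    · subst hxa
      by_cases hyb : y = b
      · subst hyb
        rw [hgab, abs_of_nonneg (by omega), abs_of_pos hg]; simp [hab]
      · rw [hac y (Ne.symm hxy) hyb]; simp [hyb, hab]
    by_cases hxb : x = b
    · subst hxb
      by_cases hya : y = a
      · subst hya
        rw [hgba, abs_of_nonpos (by omega), abs_of_neg (by omega)]; simp [hxa]
      · rw [hbc y hya (Ne.symm hxy)]; simp [hya, hxa]
    by_cases hya : y = a
    · subst hya
      rw [gap_antisymm hP' (Ne.symm hxy), gap_antisymm hP (Ne.symm hxy), hac x hxa hxb]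
      simp [hxa, hxb]
    by_cases hyb : y = b
    · subst hyb
      rw [gap_antisymm hP' (Ne.symm hxy), gap_antisymm hP (Ne.symm hxy), hbc x hxa hxb]
      simp [hxa, hxb]
    simp [gap, hmo x hxa hxb, hmo y hya hyb, hxa, hxb]
  have := Finset.sum_le_sum fun x (_ : x ∈ Finset.univ) =>
    Finset.sum_le_sum fun y (_ : y ∈ Finset.univ) => key x y
  simp only [Finset.sum_add_distrib] at this
  simpa [winv, Finset.sum_ite_irrel] using this

theorem trivCycle_pow_apply {n : ℕ} (k : ℕ) (x : ZMod n) : (trivCycle n ^ k) x = x + k := by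
  induction k with
  | zero => simp
  | succ k ih => rw [pow_succ', Equiv.Perm.mul_apply, ih]; simp [trivCycle]; ring

/-- An affine permutation without descents is a translation: the increments of the lifted labels along
the circle are at least one and add up to `n`. -/
theorem mem_zpowers_of_gap {n : ℕ} [NeZero n] (hn : 2 ≤ n) {σ : Equiv.Perm (ZMod n)}
    {P : ZMod n → ℤ} (hP : ∀ a, (P a : ZMod n) = σ a)
    (h : ∀ a b, σ b = σ a + 1 → gap P a b ≤ 0) : σ ∈ Subgroup.zpowers (trivCycle n) := by
  have hn0 : (0 : ℤ) < n := by omega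
  -- `D i` is the increase of the lifted label from position `i` to position `i + 1`
  set D : ZMod n → ℤ := fun i => (((σ.symm (i + 1)).val : ℤ) - (σ.symm i).val) -
    (P (σ.symm (i + 1)) - P (σ.symm i) - 1) with hD
  have hdvd : ∀ i, (n : ℤ) ∣ P (σ.symm (i + 1)) - P (σ.symm i) - 1 := by
    intro i
    rw [← ZMod.intCast_zmod_eq_zero_iff_dvd]
    push_cast
    rw [hP, hP]; simp
  have hD1 : ∀ i, 1 ≤ D i := by
    intro i
    have hi := h (σ.symm i) (σ.symm (i + 1)) (by simp)
    obtain ⟨k, hk⟩ := hdvd i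
    have e2 : P (σ.symm (i + 1)) - P (σ.symm i) = 1 + n * k := by linarith
    simp only [gap] at hi
    rw [e2, Int.add_mul_ediv_left _ _ hn0.ne', Int.ediv_eq_zero_of_lt (by omega) (by omega)] at hi
    have : Fact (1 < n) := ⟨hn⟩
    have hnd := not_dvd_lift_sub (σ := Equiv.refl _) (P := fun a => (a.val : ℤ)) lift_val
      (a := σ.symm i) (b := σ.symm (i + 1)) (by simp)
    simp only [hD]
    rw [hk]
    generalize (((σ.symm (i + 1)).val : ℤ) - (σ.symm i).val) = x at *
    have h1 := Int.mul_ediv_add_emod x n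
    have h2 := Int.emod_nonneg x hn0.ne'
    have h4 : x % n ≠ 0 := fun h0 => hnd (Int.dvd_of_emod_eq_zero h0)
    have h5 : (n : ℤ) * k ≤ n * (x / n) := mul_le_mul_of_nonneg_left (by linarith) hn0.le
    omega
  have hsum : ∑ i, D i = n := by
    have sh : ∀ g : ZMod n → ℤ, ∑ i, g (i + 1) = ∑ i, g i := fun g =>
      Equiv.sum_comp (Equiv.addRight (1 : ZMod n)) g
    simp only [hD, Finset.sum_sub_distrib]
    rw [sh (fun i => ((σ.symm i).val : ℤ)), sh (fun i => P (σ.symm i))]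
    simp [ZMod.card]
  have hDe : ∀ i, D i = 1 := by
    have := (Finset.sum_eq_sum_iff_of_le (s := Finset.univ) (f := fun _ : ZMod n => (1 : ℤ))
      (g := D) (fun i _ => hD1 i)).1 (by simp [hsum, ZMod.card])
    exact fun i => (this i (Finset.mem_univ i)).symm
  have hstep : ∀ i, σ.symm (i + 1) = σ.symm i + 1 := by
    intro i
    have h1 := congrArg (Int.cast : ℤ → ZMod n) (hDe i)
    have h2 := (ZMod.intCast_zmod_eq_zero_iff_dvd _ _).2 (hdvd i)
    simp only [hD] at h1
    rw [Int.cast_sub, h2] at h1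
    simp at h1
    exact sub_eq_iff_eq_add'.1 h1
  have hlin : ∀ k : ℕ, σ.symm (k : ZMod n) = σ.symm 0 + k := by
    intro k
    induction k with
    | zero => simp
    | succ k ih => push_cast; rw [hstep, ih]; ring
  rw [← inv_mem_iff]
  refine ⟨((σ.symm 0).val : ℤ), ?_⟩
  ext1 x
  have := hlin x.val
  simp only [zpow_natCast, trivCycle_pow_apply]
  simp at this
  simp [this, add_comm]

/-- Removing descents one at a time sorts `σ` within half of `winv P` swaps. -/
theorem exists_sort {n : ℕ} [NeZero n] (hn : 2 ≤ n) (m : ℕ) : ∀ (σ : Equiv.Perm (ZMod n))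
    (P : ZMod n → ℤ), (∀ a, (P a : ZMod n) = σ a) → winv P ≤ m →
    ∃ l : List (Equiv.Perm (ZMod n)), 2 * l.length ≤ m ∧ (∀ t ∈ l, IsAdjacentSwap t) ∧
      l.prod * σ ∈ Subgroup.zpowers (trivCycle n) := by
  induction m using Nat.strong_induction_on with
  | _ m ih =>
    intro σ P hP hm
    by_cases h : ∀ a b, σ b = σ a + 1 → gap P a b ≤ 0
    · exact ⟨[], by simp, by simp, by simpa using mem_zpowers_of_gap hn hP h⟩
    · push Not at h
      obtain ⟨a, b, hσ, hg⟩ := h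
      have h1 := winv_moved hn hP hσ hg
      have h0 : 0 ≤ winv (moved P a b) :=
        Finset.sum_nonneg fun _ _ => Finset.sum_nonneg fun _ _ => abs_nonneg _
      obtain ⟨l, hl, hsw, hmem⟩ := ih (m - 2) (by omega) _ _ (moved_lift hP hσ) (by omega)
      refine ⟨l ++ [Equiv.swap (σ a) (σ a + 1)], by simp; omega, ?_, ?_⟩
      · intro t ht
        rcases List.mem_append.1 ht with ht | ht
        · exact hsw t ht
        · exact ⟨σ a, by simpa using ht⟩
      · simpa [mul_assoc] using hmem

/-! ### Averaging over lifts -/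

/-- The lift of `σ` in which each label `a`, starting from `a.val`, is displaced by an integer in
`[θ, θ + n)`. -/
def cutLift {n : ℕ} (σ : Equiv.Perm (ZMod n)) (θ a : ZMod n) : ℤ :=
  a.val + θ.val + (σ a - a - θ).val

theorem cutLift_cast {n : ℕ} [NeZero n] (σ : Equiv.Perm (ZMod n)) (θ a : ZMod n) :
    (cutLift σ θ a : ZMod n) = σ a := by
  simp [cutLift]

theorem val_sub_val {n : ℕ} [NeZero n] (a b : ZMod n) :
    (b.val : ℤ) - a.val = (b - a).val + n * (((b.val : ℤ) - a.val) / n) := by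
  have h : (((b - a).val : ℕ) : ℤ) = ((b.val : ℤ) - a.val) % n := by
    rw [← ZMod.val_intCast]; simp
  rw [h]
  exact (Int.emod_add_mul_ediv _ _).symm

/-- With `s` and `g` the two residues on the right, each gap is `(D + g - s) / n` for a difference `D` of
displacements with `|D| < n`, and these `D` add up to zero over all `θ`. -/
theorem sum_gap_cutLift {n : ℕ} [NeZero n] (σ : Equiv.Perm (ZMod n)) (a b : ZMod n) :
    ∑ θ, |gap (cutLift σ θ) a b| = |((σ b - σ a).val : ℤ) - (b - a).val| := by
  have hn : (0 : ℤ) < n := by exact_mod_cast NeZero.pos n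
  set s : ℤ := ((σ b - σ a).val : ℤ) with hs
  set g : ℤ := ((b - a).val : ℤ) with hg
  set D : ZMod n → ℤ := fun θ => ((σ b - b - θ).val : ℤ) - (σ a - a - θ).val with hD
  have hs1 : 0 ≤ s := by omega
  have hs2 : s < n := by have := ZMod.val_lt (σ b - σ a); omega
  have hgap : ∀ θ, n * gap (cutLift σ θ) a b = D θ + g - s := by
    intro θ
    have e1 : cutLift σ θ b - cutLift σ θ a = D θ + g + n * (((b.val : ℤ) - a.val) / n) := by
      have := val_sub_val a b
      simp only [cutLift, hD]; linarith
    have e2 : s = (D θ + g) % n := by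
      rw [hs, ← ZMod.val_intCast]
      congr 2
      simp [hD, hg]; ring
    rw [gap, e1, Int.add_mul_ediv_left _ _ hn.ne', add_sub_cancel_right, e2]
    have := Int.mul_ediv_add_emod (D θ + g) n
    linarith
  have hsum : ∑ θ, D θ = 0 := by
    have : ∀ d : ZMod n, ∑ θ, ((d - θ).val : ℤ) = ∑ θ : ZMod n, (θ.val : ℤ) := fun d =>
      Equiv.sum_comp (Equiv.subLeft d) fun θ : ZMod n => (θ.val : ℤ)
    simp only [hD, Finset.sum_sub_distrib, this, sub_self]
  have htot : ∑ θ, gap (cutLift σ θ) a b = g - s := by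
    apply mul_left_cancel₀ hn.ne'
    rw [Finset.mul_sum]
    simp only [hgap]
    simp only [Finset.sum_sub_distrib, Finset.sum_add_distrib, hsum]
    simp [ZMod.card]; ring
  have hDb : ∀ θ, -(n : ℤ) < D θ ∧ D θ < n := by
    intro θ
    have h1 := ZMod.val_lt (σ b - b - θ)
    have h2 := ZMod.val_lt (σ a - a - θ)
    simp only [hD]; constructor <;> omega
  -- Since `|D| < n`, no gap has the sign opposite to `g - s`, so no cancellation occurs in their sum
  rcases le_total s g with h | h
  · have : ∀ θ, 0 ≤ gap (cutLift σ θ) a b := by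
      intro θ
      by_contra! hc
      have := hgap θ
      have := hDb θ
      nlinarith
    rw [abs_sub_comm, abs_of_nonneg (by omega : 0 ≤ g - s), ← htot]
    exact Finset.sum_congr rfl fun θ _ => abs_of_nonneg (this θ)
  · have : ∀ θ, gap (cutLift σ θ) a b ≤ 0 := by
      intro θ
      by_contra! hc
      have := hgap θ
      have := hDb θ
      nlinarith
    rw [abs_of_nonneg (by omega : 0 ≤ s - g), ← neg_sub g s, ← htot, ← Finset.sum_neg_distrib]
    exact Finset.sum_congr rfl fun θ _ => abs_of_nonpos (this θ)

/-- Twice the distance from the representative of `x` in `[0, n)` to the midpoint `n / 2`, except that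
`x = 0` gets the value `0`, so that pairs of equal labels do not contribute. -/
def dev {n : ℕ} (x : ZMod n) : ℤ := if x.val = 0 then 0 else |2 * (x.val : ℤ) - n|

theorem sum_range_dev (n : ℕ) :
    ∑ x ∈ Finset.range n, |2 * ((x : ℤ) + 1) - (n + 1 : ℕ)| = 2 * ((n ^ 2 / 4 : ℕ) : ℤ) := by
  induction n using Nat.twoStepInduction with
  | zero => simp
  | one => simp
  | more n ih _ =>
    rw [Finset.sum_range_succ, Finset.sum_range_succ']
    have e : ∀ x : ℕ, 2 * (((x + 1 : ℕ) : ℤ) + 1) - (n + 2 + 1 : ℕ) =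
      2 * ((x : ℤ) + 1) - (n + 1 : ℕ) := by intro x; push_cast; ring
    simp only [e, ih]
    have h1 : (n + 2) ^ 2 / 4 = n ^ 2 / 4 + n + 1 := by
      have : (n + 2) ^ 2 = n ^ 2 + 4 * (n + 1) := by ring
      omega
    rw [h1, abs_of_nonpos (by push_cast; linarith), abs_of_nonneg (by push_cast; linarith)]
    push_cast; ring

theorem sum_dev {n : ℕ} [NeZero n] :
    ∑ x : ZMod n, dev x = 2 * (((n - 1) ^ 2 / 4 : ℕ) : ℤ) := by
  obtain ⟨m, rfl⟩ : ∃ k, n = k + 1 := ⟨n - 1, by have := NeZero.pos n; omega⟩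
  have h : ∑ x : ZMod (m + 1), dev x = ∑ x ∈ Finset.range (m + 1),
      if x = 0 then (0 : ℤ) else |2 * (x : ℤ) - (m + 1 : ℕ)| :=
    Fin.sum_univ_eq_sum_range (fun x : ℕ => if x = 0 then (0 : ℤ) else |2 * (x : ℤ) - (m + 1 : ℕ)|) _
  rw [h, Finset.sum_range_succ', Nat.add_sub_cancel, ← sum_range_dev]
  simp

theorem sum_winv_cutLift {n : ℕ} [NeZero n] (σ : Equiv.Perm (ZMod n)) :
    ∑ θ, winv (cutLift σ θ) ≤ n * (2 * (((n - 1) ^ 2 / 4 : ℕ) : ℤ)) := by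
  have hpt : ∀ a b, 2 * |((σ b - σ a).val : ℤ) - (b - a).val| ≤ dev (σ b - σ a) + dev (b - a) := by
    intro a b
    by_cases h : a = b
    · simp [h, dev]
    · have h1 : b - a ≠ 0 := sub_ne_zero.2 (Ne.symm h)
      have h2 : σ b - σ a ≠ 0 := sub_ne_zero.2 fun e => h (σ.injective e).symm
      simp only [dev, ZMod.val_eq_zero, h1, h2, if_false]
      rw [← abs_two, ← abs_mul, abs_two]
      refine le_trans (le_of_eq ?_) (abs_sub _ _)
      congr 1; ring
  have hs1 : ∑ a : ZMod n, ∑ b, dev (b - a) = n * (2 * (((n - 1) ^ 2 / 4 : ℕ) : ℤ)) := by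
    have : ∀ a : ZMod n, ∑ b, dev (b - a) = 2 * (((n - 1) ^ 2 / 4 : ℕ) : ℤ) := fun a => by
      rw [← sum_dev]; exact Equiv.sum_comp (Equiv.subRight a) dev
    rw [Finset.sum_congr rfl fun a _ => this a]
    simp [ZMod.card]
  have hs2 : ∑ a : ZMod n, ∑ b, dev (σ b - σ a) = n * (2 * (((n - 1) ^ 2 / 4 : ℕ) : ℤ)) := by
    rw [← hs1, Equiv.sum_comp σ fun a => ∑ b, dev (σ b - a)]
    exact Finset.sum_congr rfl fun a _ => Equiv.sum_comp σ fun b => dev (b - a)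
  have hsw : ∑ θ, winv (cutLift σ θ) =
      ∑ a, ∑ b, |((σ b - σ a).val : ℤ) - (b - a).val| := by
    simp only [winv]
    rw [Finset.sum_comm]
    refine Finset.sum_congr rfl fun a _ => ?_
    rw [Finset.sum_comm]
    exact Finset.sum_congr rfl fun b _ => sum_gap_cutLift σ a b
  have := Finset.sum_le_sum fun a (_ : a ∈ Finset.univ) =>
    Finset.sum_le_sum fun b (_ : b ∈ Finset.univ) => hpt a b
  simp only [Finset.sum_add_distrib, ← Finset.mul_sum, hs1, hs2, ← hsw] at this
  linarith

theorem exists_short_sort {n : ℕ} [NeZero n] (hn : 2 ≤ n) (σ : Equiv.Perm (ZMod n)) :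
    ∃ l : List (Equiv.Perm (ZMod n)), l.length ≤ (n - 1) ^ 2 / 4 ∧
      (∀ t ∈ l, IsAdjacentSwap t) ∧ l.prod * σ ∈ Subgroup.zpowers (trivCycle n) := by
  obtain ⟨θ, -, hθ⟩ : ∃ θ ∈ Finset.univ, winv (cutLift σ θ) ≤ 2 * (((n - 1) ^ 2 / 4 : ℕ) : ℤ) := by
    apply Finset.exists_le_of_sum_le Finset.univ_nonempty
    simpa [ZMod.card] using sum_winv_cutLift σ
  obtain ⟨l, h1, h2, h3⟩ := exists_sort hn (2 * ((n - 1) ^ 2 / 4)) σ _ (cutLift_cast σ θ)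
    (by exact_mod_cast hθ)
  exact ⟨l, by omega, h2, h3⟩

/-! ### The reversal -/

/-- `1` if the label `a` stands before the label `b` when the positions are read as `0, …, n - 1`, and
`0` otherwise. -/
def before {n : ℕ} (σ : Equiv.Perm (ZMod n)) (a b : ZMod n) : ZMod 2 :=
  if (σ a).val < (σ b).val then 1 else 0

/-- The indicator of the unordered pair `{a, b}`. -/
def swapInd {n : ℕ} (a b x y : ZMod n) : ZMod 2 :=
  if (x = a ∧ y = b) ∨ (x = b ∧ y = a) then 1 else 0

theorem val_add_one_cases {n : ℕ} [NeZero n] (i : ZMod n) :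
    (i.val + 1 < n ∧ (i + 1).val = i.val + 1) ∨ (i.val + 1 = n ∧ (i + 1).val = 0) := by
  have h := ZMod.val_lt i
  have e : (i + 1).val = (i.val + 1) % n := by
    rw [← ZMod.val_natCast]; simp
  rcases Nat.lt_or_ge (i.val + 1) n with h1 | h1
  · left; exact ⟨h1, by rw [e, Nat.mod_eq_of_lt h1]⟩
  · right
    have : i.val + 1 = n := by omega
    exact ⟨this, by rw [e, this, Nat.mod_self]⟩

/-- The swap across the cut, of the positions `n - 1` and `0`, also reverses the order of each swapped
label relative to all others; this is the contribution of `p`, the indicator of the two labels. -/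
theorem before_swap {n : ℕ} [NeZero n] (hn : 2 ≤ n) (σ : Equiv.Perm (ZMod n)) (i : ZMod n) :
    ∃ p : ZMod n → ZMod 2, ∀ x y, x ≠ y →
      before (Equiv.swap i (i + 1) * σ) x y =
        before σ x y + swapInd (σ.symm i) (σ.symm (i + 1)) x y + p x + p y := by
  have : Fact (1 < n) := ⟨hn⟩
  rcases val_add_one_cases i with ⟨h1, h2⟩ | ⟨h1, h2⟩
  · refine ⟨fun _ => 0, fun x y hxy => ?_⟩
    have hxy' : (σ x).val ≠ (σ y).val := fun h => hxy (σ.injective (ZMod.val_injective n h))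
    have v : ∀ z, σ z = i ↔ (σ z).val = i.val := fun z => (ZMod.val_injective n).eq_iff.symm
    have v' : ∀ z, σ z = i + 1 ↔ (σ z).val = i.val + 1 := fun z => by
      rw [← h2]; exact (ZMod.val_injective n).eq_iff.symm
    simp only [before, swapInd, Equiv.Perm.mul_apply, Equiv.eq_symm_apply, Equiv.swap_apply_def,
      v, v', apply_ite ZMod.val, h2]
    split_ifs <;> first | omega | decide
  · refine ⟨fun z => if σ z = i ∨ σ z = i + 1 then 1 else 0, fun x y hxy => ?_⟩
    have hxy' : (σ x).val ≠ (σ y).val := fun h => hxy (σ.injective (ZMod.val_injective n h))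
    have lx := ZMod.val_lt (σ x)
    have ly := ZMod.val_lt (σ y)
    have v : ∀ z, σ z = i ↔ (σ z).val = i.val := fun z => (ZMod.val_injective n).eq_iff.symm
    have v' : ∀ z, σ z = i + 1 ↔ (σ z).val = 0 := fun z => by
      rw [← h2]; exact (ZMod.val_injective n).eq_iff.symm
    simp only [before, swapInd, Equiv.Perm.mul_apply, Equiv.eq_symm_apply, Equiv.swap_apply_def,
      v, v', apply_ite ZMod.val, h2]
    split_ifs <;> first | omega | decide


/-- Rotation by `k` reverses the order of a pair exactly when one of the two labels passes the cut. -/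
theorem before_add {n : ℕ} [NeZero n] (k : ZMod n) :
    ∃ p : ZMod n → ZMod 2, ∀ x y, x ≠ y →
      before (Equiv.addRight k) x y = before 1 x y + p x + p y := by
  refine ⟨fun z => if z.val + k.val < n then 0 else 1, fun x y hxy => ?_⟩
  have hxy' : x.val ≠ y.val := fun h => hxy (ZMod.val_injective n h)
  have lx := ZMod.val_lt x
  have ly := ZMod.val_lt y
  have lk := ZMod.val_lt k
  have e : ∀ z : ZMod n, (z + k).val = if z.val + k.val < n then z.val + k.val
      else z.val + k.val - n := by
    intro z
    have lz := ZMod.val_lt z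
    rw [ZMod.val_add]
    split_ifs with h
    · exact Nat.mod_eq_of_lt h
    · rw [Nat.mod_eq_sub_mod (by omega), Nat.mod_eq_of_lt (by omega)]
  have h1 : before 1 x y = if x.val < y.val then 1 else 0 := rfl
  simp only [h1]
  simp only [before, Equiv.coe_addRight, e]
  split_ifs <;> first | omega | decide

theorem before_zpowers {n : ℕ} [NeZero n] {σ : Equiv.Perm (ZMod n)}
    (hσ : σ ∈ Subgroup.zpowers (trivCycle n)) :
    ∃ p : ZMod n → ZMod 2, ∀ x y, x ≠ y → before σ x y = before 1 x y + p x + p y := by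
  obtain ⟨k, rfl⟩ := mem_powers_iff_mem_zpowers.2 hσ
  have : trivCycle n ^ k = Equiv.addRight (k : ZMod n) := Equiv.ext (trivCycle_pow_apply k)
  simp only [this]
  exact before_add _

theorem card_swapInd {n : ℕ} [NeZero n] (a b : ZMod n) :
    (Finset.univ.filter fun q : ZMod n × ZMod n => swapInd a b q.1 q.2 ≠ 0).card ≤ 2 := by
  refine (Finset.card_le_card (t := {(a, b), (b, a)}) ?_).trans Finset.card_le_two
  rintro ⟨x, y⟩ h
  simp only [Finset.mem_insert, Finset.mem_singleton, Prod.mk.injEq]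
  by_contra hc
  exact (Finset.mem_filter.1 h).2 (if_neg hc)

/-- Here `h x y` is the parity of the number of times the labels `x` and `y` are swapped; the count is over
ordered pairs, whence the factor two. -/
theorem before_prod {n : ℕ} [NeZero n] (hn : 2 ≤ n) (σ : Equiv.Perm (ZMod n))
    (l : List (Equiv.Perm (ZMod n))) (hl : ∀ t ∈ l, IsAdjacentSwap t) :
    ∃ (h : ZMod n → ZMod n → ZMod 2) (p : ZMod n → ZMod 2),
      (Finset.univ.filter fun q : ZMod n × ZMod n => h q.1 q.2 ≠ 0).card ≤ 2 * l.length ∧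
      ∀ x y, x ≠ y → before (l.prod * σ) x y = before σ x y + h x y + p x + p y := by
  induction l with
  | nil => exact ⟨0, 0, by simp, by simp⟩
  | cons t l ih =>
    obtain ⟨h, p, hc, hh⟩ := ih fun t ht => hl t (List.mem_cons_of_mem _ ht)
    obtain ⟨i, rfl⟩ := hl t List.mem_cons_self
    obtain ⟨p', hp'⟩ := before_swap hn (l.prod * σ) i
    set u := (l.prod * σ).symm i
    set v := (l.prod * σ).symm (i + 1)
    refine ⟨fun x y => h x y + swapInd u v x y, fun x => p x + p' x, ?_, ?_⟩
    · have := card_swapInd u v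
      refine (Finset.card_le_card (t := (Finset.univ.filter fun q : ZMod n × ZMod n =>
        h q.1 q.2 ≠ 0) ∪ (Finset.univ.filter fun q => swapInd u v q.1 q.2 ≠ 0)) ?_).trans
        ((Finset.card_union_le _ _).trans ?_)
      · intro q hq
        simp only [Finset.mem_union, Finset.mem_filter, Finset.mem_univ, true_and] at hq ⊢
        by_contra! hcon
        exact hq (by simp [hcon])
      · simp only [List.length_cons]; omega
    · intro x y hxy
      rw [List.prod_cons, mul_assoc, hp' x y hxy, hh x y hxy]
      ring

/-- The permutation `Equiv.subLeft (-1)` is the reversal `a ↦ -1 - a`, which on representatives is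
`a ↦ n - 1 - a` and so reverses the order of every pair. -/
theorem le_of_reversal {n : ℕ} [NeZero n] (hn : 2 ≤ n) (l : List (Equiv.Perm (ZMod n)))
    (hl : ∀ t ∈ l, IsAdjacentSwap t)
    (hmem : l.prod * Equiv.subLeft (-1) ∈ Subgroup.zpowers (trivCycle n)) :
    (n - 1) ^ 2 / 4 ≤ l.length := by
  obtain ⟨h, p, hc, hh⟩ := before_prod hn (Equiv.subLeft (-1)) l hl
  obtain ⟨p', hp'⟩ := before_zpowers hmem
  have hrev : ∀ z : ZMod n, ((-1 : ZMod n) - z).val = n - 1 - z.val := by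
    intro z
    have lz := ZMod.val_lt z
    have e : (-1 : ZMod n) - z = ((n - 1 - z.val : ℕ) : ZMod n) := by
      rw [Nat.cast_sub (by omega), Nat.cast_sub (by omega)]; simp
    rw [e, ZMod.val_natCast, Nat.mod_eq_of_lt (by omega)]
  set c : ZMod n → ZMod 2 := fun x => p x + p' x with hcdef
  -- The hypotheses give `h x y = 1 + c x + c y` off the diagonal.
  have hone : ∀ x y, x ≠ y → c x = c y → h x y ≠ 0 := by
    intro x y hxy hcxy h0
    have h1 := hh x y hxy
    rw [hp' x y hxy, h0] at h1
    have hxy' : x.val ≠ y.val := fun h => hxy (ZMod.val_injective n h)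
    have lx := ZMod.val_lt x
    have ly := ZMod.val_lt y
    have hb : before (Equiv.subLeft (-1)) x y = before 1 x y + 1 := by
      have h1 : before 1 x y = if x.val < y.val then 1 else 0 := rfl
      rw [h1]
      simp only [before, Equiv.subLeft_apply, hrev]
      split_ifs <;> first | omega | decide
    rw [hb] at h1
    simp only [hcdef] at hcxy
    generalize before 1 x y = b at *
    generalize p x = p1 at *
    generalize p y = p2 at *
    generalize p' x = p3 at *
    generalize p' y = p4 at *
    clear * - h1 hcxy
    revert h1 hcxy
    revert b p1 p2 p3 p4
    decide
  set S := Finset.univ.filter fun x => c x = 0 with hS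
  have hle : (S.offDiag ∪ Sᶜ.offDiag).card ≤ 2 * l.length := by
    refine (Finset.card_le_card ?_).trans hc
    rintro ⟨x, y⟩ hq
    have two : ∀ a b : ZMod 2, a ≠ 0 → b ≠ 0 → a = b := by decide
    simp only [Finset.mem_union, Finset.mem_offDiag, hS, Finset.mem_filter, Finset.mem_compl,
      Finset.mem_univ, true_and] at hq ⊢
    rcases hq with ⟨h1, h2, h3⟩ | ⟨h1, h2, h3⟩
    · exact hone x y h3 (h1.trans h2.symm)
    · exact hone x y h3 (two _ _ h1 h2)
  have hdisj : Disjoint S.offDiag Sᶜ.offDiag := by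
    rw [Finset.disjoint_left]
    rintro ⟨x, y⟩ h1 h2
    simp only [Finset.mem_offDiag, Finset.mem_compl] at h1 h2
    exact h2.1 h1.1
  rw [Finset.card_union_of_disjoint hdisj, Finset.offDiag_card, Finset.offDiag_card] at hle
  have hcard : S.card + Sᶜ.card = n := by rw [Finset.card_add_card_compl, ZMod.card]
  generalize S.card = s at *
  generalize Sᶜ.card = t at *
  obtain ⟨n, rfl⟩ : ∃ k, n = k + 1 := ⟨n - 1, by omega⟩
  simp only [Nat.add_sub_cancel]
  have h1 : s * s + t * t ≤ 2 * l.length + (n + 1) := by omega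
  have h2 : (n + 1) ^ 2 ≤ 2 * (s * s + t * t) := by
    rw [← hcard]; nlinarith [sq_nonneg ((s : ℤ) - t), two_mul_le_add_sq s t]
  -- The slack of one is absorbed by the floor in the goal.
  have h3 : n ^ 2 ≤ 4 * l.length + 1 := by nlinarith
  omega

/-! ### The maximal distance -/

theorem f_eq (n : ℕ) (hn : 1 ≤ n) : f n = (n - 1) ^ 2 / 4 := by
  have : NeZero n := ⟨by omega⟩
  rcases hn.eq_or_lt with rfl | hn2
  · have hz : ∀ π : Equiv.Perm (ZMod 1), sortDist π = 0 := fun π =>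
      Nat.sInf_eq_zero.2 (Or.inl ⟨[], rfl, by simp, by
        rw [Subsingleton.elim (([] : List (Equiv.Perm (ZMod 1))).prod * π) 1]; exact one_mem _⟩)
    simp [f, hz]
  have hub : ∀ π : Equiv.Perm (ZMod n), sortDist π ≤ (n - 1) ^ 2 / 4 := by
    intro π
    obtain ⟨l, h1, h2, h3⟩ := exists_short_sort hn2 π
    have h : sortDist π ≤ l.length := Nat.sInf_le ⟨l, rfl, h2, h3⟩
    exact h.trans h1
  refine IsGreatest.csSup_eq (s := {m | ∃ π : Equiv.Perm (ZMod n), m = sortDist π}) 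
    ⟨⟨Equiv.subLeft (-1), le_antisymm ?_ (hub _)⟩, ?_⟩
  · obtain ⟨l, -, h2, h3⟩ := exists_short_sort hn2 (Equiv.subLeft (-1))
    obtain ⟨l', h1', h2', h3'⟩ := Nat.sInf_mem (s := {m | ∃ l : List (Equiv.Perm (ZMod n)),
      l.length = m ∧ (∀ t ∈ l, IsAdjacentSwap t) ∧
      l.prod * Equiv.subLeft (-1) ∈ Subgroup.zpowers (trivCycle n)}) ⟨_, l, rfl, h2, h3⟩
    exact (le_of_reversal hn2 l' h2' h3').trans h1'.le
  · rintro _ ⟨π, rfl⟩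
    exact hub π
end

section
/- For every integer n ≥ 1, f(n) ≤ ⌊(n-1)²/4⌋; that is, every labeling of the vertices of an n-cycle can be sorted to the trivial cyclic permutation using at most ⌊(n-1)²/4⌋ adjacent swaps. -/
/-- The ordered pairs of places `(i, j)` such that the token at `i` overtakes the token at `j` when
each token at `p` travels clockwise to `τ p`. -/
def overtakes {n : ℕ} [NeZero n] (τ : Equiv.Perm (ZMod n)) : Finset (ZMod n × ZMod n) :=
  Finset.univ.filter fun q => (τ q.2 - q.2).val + (q.2 - q.1).val < (τ q.1 - q.1).val

lemma mem_overtakes {n : ℕ} [NeZero n] {τ : Equiv.Perm (ZMod n)} {i j : ZMod n} :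
    (i, j) ∈ overtakes τ ↔ (τ j - j).val + (j - i).val < (τ i - i).val := by
  simp [overtakes]

lemma val_add_one_of_lt {n : ℕ} [NeZero n] {a : ZMod n} (h : a.val + 1 < n) :
    (a + 1).val = a.val + 1 := by
  have h3 : ((a.val + 1 : ℕ) : ZMod n) = a + 1 := by simp
  rw [← h3, ZMod.val_natCast_of_lt h]

lemma val_add_one_of_ne {n : ℕ} [NeZero n] {a : ZMod n} (h : a + 1 ≠ 0) :
    (a + 1).val = a.val + 1 := by
  apply val_add_one_of_lt
  by_contra hlt
  apply h
  have h1 := ZMod.val_lt a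
  have h2 : a.val + 1 = n := by omega
  have h3 : ((a.val + 1 : ℕ) : ZMod n) = a + 1 := by simp
  rw [← h3, h2, ZMod.natCast_self]

/-- Exchanging two adjacent tokens, the first of which travels farther than the second, removes at
least one overtaking pair. -/
lemma card_overtakes_swap {n : ℕ} [NeZero n] (τ : Equiv.Perm (ZMod n)) (p : ZMod n)
    (hp : (τ (p + 1) - (p + 1)).val < (τ p - p).val) :
    (overtakes (τ * Equiv.swap p (p + 1))).card < (overtakes τ).card := by
  have hpp : p ≠ p + 1 := by
    intro h
    rw [← h] at hp
    exact lt_irrefl _ hp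
  have hlt := ZMod.val_lt (τ p - p)
  -- The two displacements cannot differ by exactly one, since `τ` is injective.
  have hne : (τ p - p).val ≠ (τ (p + 1) - (p + 1)).val + 1 := by
    intro h
    rw [← val_add_one_of_lt (by omega)] at h
    have := ZMod.val_injective n h
    apply hpp
    apply τ.injective
    linear_combination this
  have hx1 : (τ p - p).val = (τ p - (p + 1)).val + 1 := by
    rw [← val_add_one_of_ne]
    · congr 1; ring
    · intro h
      have : τ p - p = 0 := by linear_combination h
      rw [this, ZMod.val_zero] at hp
      omega
  have hx0 : (τ (p + 1) - p).val = (τ (p + 1) - (p + 1)).val + 1 := by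
    rw [← val_add_one_of_lt (by omega)]
    congr 1; ring
  -- How the clockwise distance to or from a third place changes.
  have hfrom : ∀ j, j ≠ p → (j - p).val = (j - (p + 1)).val + 1 := by
    intro j hj
    rw [← val_add_one_of_ne]
    · congr 1; ring
    · intro h
      exact hj (by linear_combination h)
  have hto : ∀ i, i ≠ p + 1 → (p + 1 - i).val = (p - i).val + 1 := by
    intro i hi
    rw [← val_add_one_of_ne]
    · congr 1; ring
    · intro h
      exact hi (by linear_combination -h)
  have hone : (p + 1 - p).val = 1 := by
    rw [hto p hpp]; simp
  have hback : (p - (p + 1)).val = n - 1 := by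
    rw [← neg_sub, ZMod.neg_val, hone, if_neg]
    intro h
    rw [h, ZMod.val_zero] at hone
    exact zero_ne_one hone
  have hmem : (p, p + 1) ∈ overtakes τ := by
    rw [mem_overtakes]
    omega
  rw [← Finset.card_erase_add_one hmem, Nat.lt_succ_iff]
  apply Finset.card_le_card_of_injOn
    (fun q => (Equiv.swap p (p + 1) q.1, Equiv.swap p (p + 1) q.2))
  · rintro ⟨i, j⟩ hij
    have hij' : (i, j) ∈ overtakes (τ * Equiv.swap p (p + 1)) := hij
    rw [mem_overtakes] at hij'
    simp only [Equiv.Perm.coe_mul, Function.comp_apply] at hij'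
    rw [Finset.mem_coe, Finset.mem_erase, mem_overtakes, and_comm, Ne, Prod.mk.injEq]
    by_cases hi0 : i = p
    · subst hi0
      rw [Equiv.swap_apply_left] at hij' ⊢
      by_cases hj1 : j = i + 1
      · subst hj1
        rw [Equiv.swap_apply_right] at hij'
        omega
      · by_cases hj0 : j = i
        · subst hj0
          simp at hij'
        · rw [Equiv.swap_apply_of_ne_of_ne hj0 hj1] at hij' ⊢
          have := hfrom j hj0
          exact ⟨by omega, fun h => hpp h.1.symm⟩
    · by_cases hi1 : i = p + 1
      · subst hi1
        rw [Equiv.swap_apply_right] at hij' ⊢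
        by_cases hj0 : j = p
        · subst hj0
          rw [Equiv.swap_apply_left] at hij'
          omega
        · by_cases hj1 : j = p + 1
          · subst hj1
            simp at hij'
          · rw [Equiv.swap_apply_of_ne_of_ne hj0 hj1] at hij' ⊢
            have := hfrom j hj0
            exact ⟨by omega, fun h => hj1 h.2⟩
      · rw [Equiv.swap_apply_of_ne_of_ne hi0 hi1] at hij' ⊢
        refine ⟨?_, fun h => hi0 h.1⟩
        have := hto i hi1
        by_cases hj0 : j = p
        · subst hj0
          rw [Equiv.swap_apply_left] at hij' ⊢
          omega
        · by_cases hj1 : j = p + 1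
          · subst hj1
            rw [Equiv.swap_apply_right] at hij' ⊢
            omega
          · rw [Equiv.swap_apply_of_ne_of_ne hj0 hj1] at hij' ⊢
            exact hij'
  · rintro ⟨i, j⟩ _ ⟨i', j'⟩ _ h
    simpa using h

/-- A permutation is a product of at most `(overtakes τ).card` adjacent swaps, up to a rotation. -/
lemma exists_swaps {n : ℕ} [NeZero n] (τ : Equiv.Perm (ZMod n)) :
    ∃ l : List (Equiv.Perm (ZMod n)), l.length ≤ (overtakes τ).card ∧
      (∀ t ∈ l, IsAdjacentSwap t) ∧ l.prod * τ⁻¹ ∈ Subgroup.zpowers (trivCycle n) := by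
  induction hN : (overtakes τ).card using Nat.strong_induction_on generalizing τ with
  | _ N ih =>
  by_cases h : ∃ p, (τ (p + 1) - (p + 1)).val < (τ p - p).val
  · obtain ⟨p, hp⟩ := h
    have hlt := card_overtakes_swap τ p hp
    obtain ⟨l, hl, hadj, hmem⟩ := ih _ (hN ▸ hlt) _ rfl
    refine ⟨l ++ [Equiv.swap p (p + 1)], ?_, ?_, ?_⟩
    · simp only [List.length_append, List.length_singleton]
      omega
    · intro t ht
      rcases List.mem_append.1 ht with ht | ht
      · exact hadj t ht
      · exact ⟨p, List.mem_singleton.1 ht⟩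
    · simpa [mul_assoc] using hmem
  · -- Displacements that never decrease around the circle are constant.
    push Not at h
    have hmono : ∀ (m : ℕ) (p : ZMod n), (τ p - p).val ≤ (τ (p + m) - (p + m)).val := by
      intro m p
      induction m with
      | zero => simp
      | succ m ihm =>
        push_cast
        rw [← add_assoc]
        exact ihm.trans (h _)
    have hconst : ∀ p, τ p = p + τ 0 := by
      intro p
      have h1 := hmono p.val 0
      have h2 := hmono (-p).val p
      rw [ZMod.natCast_zmod_val] at h1 h2
      rw [add_neg_cancel] at h2
      rw [zero_add] at h1
      have h3 := ZMod.val_injective n (le_antisymm h1 h2)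
      linear_combination -h3
    refine ⟨[], by simp, by simp, ?_⟩
    rw [List.prod_nil, one_mul, inv_mem_iff, Subgroup.mem_zpowers_iff]
    refine ⟨((τ 0).val : ℤ), ?_⟩
    ext p
    rw [hconst p]
    simp [trivCycle]

/-- Among the rotations `k`, at most `e - D` make a token with displacement `u + k` overtake one
with displacement `w + k` that is `D` steps ahead and whose target is `e` steps ahead. -/
lemma card_shift_le {n : ℕ} [NeZero n] (u w D e : ZMod n) (h : u - w = D - e) :
    (Finset.univ.filter fun k : ZMod n => (w + k).val + D.val < (u + k).val).card
      ≤ e.val - D.val := by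
  rw [← Finset.card_range (e.val - D.val)]
  apply Finset.card_le_card_of_injOn (fun k => (w + k).val)
  · intro k hk
    simp only [Finset.coe_filter, Finset.mem_univ, true_and, Set.mem_ofPred_eq] at hk
    simp only [Finset.coe_range, Set.mem_Iio]
    have h1 : ((u + k) - (w + k)).val = (u + k).val - (w + k).val := ZMod.val_sub (by omega)
    have h2 : (u + k) - (w + k) = D - e := by linear_combination h
    rw [h2] at h1
    have hlt := ZMod.val_lt (u + k)
    have hDe : D.val < e.val := by
      by_contra hcon
      have := ZMod.val_sub (not_lt.1 hcon)
      omega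
    have h3 := ZMod.val_sub hDe.le
    have h4 := ZMod.neg_val (D - e)
    rw [neg_sub] at h4
    split_ifs at h4 with h5
    · omega
    · omega
  · intro k _ k' _ hk
    exact add_left_cancel (ZMod.val_injective n hk)

lemma sum_val_sub {n : ℕ} [NeZero n] (g : ℕ → ℕ) (s : ZMod n ≃ ZMod n) :
    ∑ j, g (s j).val = ∑ v ∈ Finset.range n, g v := by
  rw [Equiv.sum_comp s (fun x => g x.val)]
  obtain ⟨m, rfl⟩ := Nat.exists_eq_succ_of_ne_zero (NeZero.ne n)
  exact Fin.sum_univ_eq_sum_range g (m + 1)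

lemma sum_range_sub_left (m r : ℕ) :
    2 * ∑ v ∈ Finset.range (m + r), (v - m) = r * (r - 1) := by
  induction r with
  | zero =>
    simp only [add_zero, zero_mul, mul_eq_zero, Finset.sum_eq_zero_iff, Finset.mem_range]
    right
    intro v hv
    omega
  | succ r ih =>
    rw [← add_assoc, Finset.sum_range_succ, mul_add, ih, Nat.add_sub_cancel_left]
    cases r <;> simp
    ring

lemma sum_range_sub_right (m r : ℕ) :
    2 * ∑ v ∈ Finset.range (m + r), (m - v) = m * (m + 1) := by
  induction r with
  | zero =>
    rw [add_zero, ← Finset.sum_range_reflect]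
    rw [Finset.sum_congr rfl (g := fun v => v + 1)]
    · rw [Finset.sum_add_distrib, mul_add, mul_comm 2, Finset.sum_range_id_mul_two]
      simp
      cases m <;> simp
      ring
    · intro v hv
      rw [Finset.mem_range] at hv
      omega
  | succ r ih =>
    rw [← add_assoc, Finset.sum_range_succ, mul_add, ih]
    omega

/-- With `D` and `e` the clockwise distances from `i` to `j` and from `σ i` to `σ j`, the sum over
`j` of the positive parts of `e - D` is at most `⌊(n - 1)² / 4⌋`. -/
lemma sum_sub_le {n : ℕ} [NeZero n] (σ : Equiv.Perm (ZMod n)) (i : ZMod n) :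
    ∑ j, ((σ j - σ i).val - (j - i).val) ≤ (n - 1) ^ 2 / 4 := by
  set m := n / 2 with hm
  have hn : 0 < n := Nat.pos_of_ne_zero (NeZero.ne n)
  have h1 : ∑ j, ((σ j - σ i).val - (j - i).val) + m
      ≤ ∑ j, ((σ j - σ i).val - m) + ∑ j, (m - (j - i).val) := by
    -- The extra `m` comes from `j = i`, where both distances vanish.
    rw [← Finset.sum_add_distrib]
    have : m = ∑ j, if j = i then m else 0 := by simp
    conv_lhs => rw [this]
    rw [← Finset.sum_add_distrib]
    apply Finset.sum_le_sum
    intro j _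
    split_ifs with hj
    · subst hj; simp
    · omega
  have h2 := sum_val_sub (fun v => v - m) (σ.trans (Equiv.subRight (σ i)))
  have h3 := sum_val_sub (fun v => m - v) (Equiv.subRight i)
  simp only [Equiv.trans_apply, Equiv.subRight_apply] at h2 h3
  rw [h2, h3] at h1
  have h4 := sum_range_sub_left m (n - m)
  have h5 := sum_range_sub_right m (n - m)
  rw [show m + (n - m) = n by omega] at h4 h5
  rw [Nat.le_div_iff_mul_le (by norm_num)]
  rcases Nat.even_or_odd' n with ⟨q, hq | hq⟩
  · have hmq : m = q := by omega
    obtain ⟨r, rfl⟩ : ∃ r, q = r + 1 := ⟨q - 1, by omega⟩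
    rw [hmq] at h1 h4 h5
    rw [show n - (r + 1) = r + 1 by omega, Nat.add_sub_cancel] at h4
    rw [show n - 1 = 2 * r + 1 by omega]
    nlinarith
  · have hmq : m = q := by omega
    rw [hmq] at h1 h4 h5
    rw [show n - q = q + 1 by omega, Nat.add_sub_cancel] at h4
    rw [show n - 1 = 2 * q by omega]
    nlinarith

/-- The total number of overtaking pairs, summed over all final rotations `k`. -/
lemma sum_card_overtakes_le {n : ℕ} [NeZero n] (σ : Equiv.Perm (ZMod n)) :
    ∑ k : ZMod n, (overtakes (Equiv.addRight k * σ)).card ≤ n * ((n - 1) ^ 2 / 4) := by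
  calc ∑ k : ZMod n, (overtakes (Equiv.addRight k * σ)).card
      = ∑ q : ZMod n × ZMod n, (Finset.univ.filter fun k : ZMod n =>
          ((σ q.2 - q.2) + k).val + (q.2 - q.1).val < ((σ q.1 - q.1) + k).val).card := by
        simp only [overtakes, Finset.card_filter]
        rw [Finset.sum_comm]
        simp only [Equiv.Perm.coe_mul, Function.comp_apply, Equiv.coe_addRight, add_sub_right_comm]
    _ ≤ ∑ q : ZMod n × ZMod n, ((σ q.2 - σ q.1).val - (q.2 - q.1).val) :=
        Finset.sum_le_sum fun q _ => card_shift_le _ _ _ _ (by ring)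
    _ = ∑ i, ∑ j, ((σ j - σ i).val - (j - i).val) := Fintype.sum_prod_type _
    _ ≤ ∑ _i : ZMod n, (n - 1) ^ 2 / 4 := Finset.sum_le_sum fun i _ => sum_sub_le σ i
    _ = n * ((n - 1) ^ 2 / 4) := by simp [ZMod.card]

lemma addRight_mem_zpowers {n : ℕ} [NeZero n] (k : ZMod n) :
    (Equiv.addRight k : Equiv.Perm (ZMod n)) ∈ Subgroup.zpowers (trivCycle n) := by
  rw [Subgroup.mem_zpowers_iff]
  refine ⟨(k.val : ℤ), ?_⟩
  ext p
  simp [trivCycle]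

lemma sortDist_le {n : ℕ} [NeZero n] (π : Equiv.Perm (ZMod n)) :
    sortDist π ≤ (n - 1) ^ 2 / 4 := by
  obtain ⟨k, -, hk⟩ : ∃ k ∈ (Finset.univ : Finset (ZMod n)),
      (overtakes (Equiv.addRight k * π⁻¹)).card ≤ (n - 1) ^ 2 / 4 := by
    apply Finset.exists_le_of_sum_le Finset.univ_nonempty
    simpa [ZMod.card] using sum_card_overtakes_le π⁻¹
  obtain ⟨l, hl, hadj, hmem⟩ := exists_swaps (Equiv.addRight k * π⁻¹)
  refine le_trans (Nat.sInf_le ⟨l, rfl, hadj, ?_⟩) (hl.trans hk)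
  rw [mul_inv_rev, inv_inv, ← mul_assoc] at hmem
  exact (Subgroup.mul_mem_cancel_right _ (inv_mem (addRight_mem_zpowers k))).1 hmem

theorem f_le (n : ℕ) (hn : 1 ≤ n) : f n ≤ (n - 1) ^ 2 / 4 := by
  have : NeZero n := ⟨by omega⟩
  refine csSup_le ⟨_, 1, rfl⟩ ?_
  rintro m ⟨π, rfl⟩
  exact sortDist_le π
end

section
/- Let n be an odd positive integer and k an integer, and let w_{n,k} ∈ Perm(ZMod n) be defined by w_{n,k}(i) = k - i. If t_1, …, t_m are adjacent swaps such that t_m ∘ ⋯ ∘ t_1 ∘ w_{n,k} is the identity permutation, then m ≥ (n-1)²/4. -/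
lemma val_succ_cases {n : ℕ} [NeZero n] (i : ZMod n) :
    (i.val + 1 = n ∧ (i + 1).val = 0) ∨ (i.val + 1 < n ∧ (i + 1).val = i.val + 1) := by
  have h2 : ((i.val + 1 : ℕ) : ZMod n) = i + 1 := by simp
  rw [← h2, ZMod.val_natCast]
  have := ZMod.val_lt i
  rcases Nat.lt_or_ge (i.val + 1) n with h | h
  · exact Or.inr ⟨h, Nat.mod_eq_of_lt h⟩
  · have h1 : i.val + 1 = n := by omega
    exact Or.inl ⟨h1, by rw [h1, Nat.mod_self]⟩

/-- Whether the swap of `i` and `i + 1` moves the content of position `u` across the cut between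
`n - 1` and `0`. -/
def crossesCut {n : ℕ} (i u : ZMod n) : Bool :=
  decide (i.val + 1 = n ∧ (u = i ∨ u = i + 1))

/-- Unless `u` and `v` are exchanged with each other, an adjacent swap reverses their order exactly
when one of them, but not the other, moves across the cut. -/
lemma val_swap_lt_iff {n : ℕ} [NeZero n] (i u v : ZMod n)
    (h1 : ¬ (u = i ∧ v = i + 1)) (h2 : ¬ (u = i + 1 ∧ v = i)) :
    ((Equiv.swap i (i + 1) u).val < (Equiv.swap i (i + 1) v).val) ↔
      ((u.val < v.val) ↔ (crossesCut i u = crossesCut i v)) := by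
  have inj : ∀ a b : ZMod n, a = b ↔ a.val = b.val :=
    fun a b => ⟨fun h => h ▸ rfl, fun h => ZMod.val_injective n h⟩
  have hu := ZMod.val_lt u
  have hv := ZMod.val_lt v
  simp only [crossesCut, Equiv.swap_apply_def, decide_eq_decide, apply_ite ZMod.val]
  simp only [inj] at h1 h2 ⊢
  rcases val_succ_cases i with ⟨h, h'⟩ | ⟨h, h'⟩ <;> simp only [h'] at * <;> split_ifs <;> omega

/-- After a product of adjacent swaps there are parity bits `ε` which, up to at most two exceptional
ordered pairs per swap, determine which pairs of tokens have changed their order. -/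
lemma exists_coloring {n : ℕ} [NeZero n] (l : List (Equiv.Perm (ZMod n)))
    (hl : ∀ t ∈ l, IsAdjacentSwap t) :
    ∃ (ε : ZMod n → Bool) (B : Finset (ZMod n × ZMod n)), B.card ≤ 2 * l.length ∧
      ∀ x y, x ≠ y → (x, y) ∉ B →
        (((l.prod x).val < (l.prod y).val) ↔ ((x.val < y.val) ↔ (ε x = ε y))) := by
  induction l with
  | nil => exact ⟨fun _ => false, ∅, by simp, by simp⟩
  | cons t l ih =>
    obtain ⟨ε, B, hB, h⟩ := ih fun t ht => hl t (List.mem_cons_of_mem _ ht)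
    obtain ⟨i, rfl⟩ := hl t List.mem_cons_self
    set σ := l.prod with hσ
    -- the two tokens that are swapped with each other
    set a := σ.symm i
    set b := σ.symm (i + 1)
    refine ⟨fun x => xor (ε x) (crossesCut i (σ x)), insert (a, b) (insert (b, a) B), ?_, ?_⟩
    · have e1 := Finset.card_insert_le (a, b) (insert (b, a) B)
      have e2 := Finset.card_insert_le (b, a) B
      simp only [List.length_cons]
      omega
    · intro x y hxy hxyB
      simp only [Finset.mem_insert, not_or, Prod.mk.injEq] at hxyB
      obtain ⟨n1, n2, n3⟩ := hxyB
      have key := val_swap_lt_iff i (σ x) (σ y)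
        (fun e => n1 ⟨(Equiv.eq_symm_apply σ).2 e.1, (Equiv.eq_symm_apply σ).2 e.2⟩)
        (fun e => n2 ⟨(Equiv.eq_symm_apply σ).2 e.1, (Equiv.eq_symm_apply σ).2 e.2⟩)
      rw [List.prod_cons, ← hσ, Equiv.Perm.mul_apply, Equiv.Perm.mul_apply, key, h x y hxy n3]
      beta_reduce
      by_cases hlt : x.val < y.val <;>
        cases ε x <;> cases ε y <;> cases crossesCut i (σ x) <;> cases crossesCut i (σ y) <;>
        simp [hlt]

lemma val_sub_cases {n : ℕ} [NeZero n] (c x : ZMod n) :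
    (x.val ≤ c.val ∧ (c - x).val + x.val = c.val) ∨
      (c.val < x.val ∧ (c - x).val + x.val = c.val + n) := by
  have h : (c - x + x).val = c.val := by simp
  rw [ZMod.val_add] at h
  have h1 := ZMod.val_lt (c - x)
  have h2 := ZMod.val_lt x
  rcases Nat.lt_or_ge ((c - x).val + x.val) n with h3 | h3
  · rw [Nat.mod_eq_of_lt h3] at h; omega
  · rw [Nat.mod_eq_sub_mod h3, Nat.mod_eq_of_lt (by omega)] at h; omega

lemma val_sub_lt_iff {n : ℕ} [NeZero n] (c x y : ZMod n) (hxy : x ≠ y) :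
    ((c - x).val < (c - y).val) ↔
      ¬ ((x.val < y.val) ↔ (decide (x.val ≤ c.val) = decide (y.val ≤ c.val))) := by
  have hv : x.val ≠ y.val := fun h => hxy (ZMod.val_injective n h)
  have h1 := ZMod.val_lt x
  have h2 := ZMod.val_lt y
  rw [decide_eq_decide]
  rcases val_sub_cases c x with ⟨_, _⟩ | ⟨_, _⟩ <;>
    rcases val_sub_cases c y with ⟨_, _⟩ | ⟨_, _⟩ <;> omega

/-- Sorting `w_{n,k} : i ↦ k - i` (for odd `n`) by adjacent swaps requires at
least `(n-1)²/4` swaps. -/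
theorem lower_bound_odd (n : ℕ) (hn : 0 < n) (hodd : Odd n) (k : ℤ)
    (l : List (Equiv.Perm (ZMod n)))
    (hl : ∀ t ∈ l, IsAdjacentSwap t)
    (hsort : l.prod * Equiv.subLeft (k : ZMod n) = 1) :
    ((n : ℝ) - 1) ^ 2 / 4 ≤ (l.length : ℝ) := by
  have : NeZero n := ⟨hn.ne'⟩
  obtain ⟨ε, B, hB, h⟩ := exists_coloring l hl
  set c : ZMod n := (k : ZMod n)
  -- the reflection is an involution, so the product of the swaps is the reflection itself
  have hprod : ∀ x, l.prod x = c - x := by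
    intro x
    have := congrArg (fun σ : Equiv.Perm (ZMod n) => σ (c - x)) hsort
    simpa using this
  set S : Finset (ZMod n) := Finset.univ.filter fun x => xor (ε x) (decide (x.val ≤ c.val)) = true
    with hS
  have hsub : S.offDiag ∪ Sᶜ.offDiag ⊆ B := by
    rintro ⟨x, y⟩ hp
    by_contra hnB
    simp only [hS, Finset.mem_union, Finset.mem_offDiag, Finset.mem_compl, Finset.mem_filter,
      Finset.mem_univ, true_and] at hp
    have hxy : x ≠ y := by tauto
    have h1 := h x y hxy hnB
    rw [hprod, hprod, val_sub_lt_iff c x y hxy] at h1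
    revert h1 hp
    generalize decide (x.val ≤ c.val) = p
    generalize decide (y.val ≤ c.val) = q
    by_cases hlt : x.val < y.val <;>
      cases ε x <;> cases ε y <;> cases p <;> cases q <;> simp [hlt]
  have hdisj : Disjoint S.offDiag Sᶜ.offDiag := by
    rw [Finset.disjoint_left]
    rintro ⟨x, y⟩ h1 h2
    simp only [Finset.mem_offDiag, Finset.mem_compl] at h1 h2
    exact h2.1 h1.1
  have hcard := Finset.card_le_card hsub
  rw [Finset.card_union_of_disjoint hdisj, Finset.offDiag_card, Finset.offDiag_card] at hcard
  have hsum : S.card + Sᶜ.card = n := by rw [Finset.card_add_card_compl, ZMod.card]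
  generalize S.card = s at *
  generalize Sᶜ.card = r at *
  have hs : s ≤ s * s := Nat.le_mul_self s
  have hr : r ≤ r * r := Nat.le_mul_self r
  have hmain : s * s + r * r ≤ 2 * l.length + n := by omega
  have hmainZ : (s : ℤ) * s + r * r ≤ 2 * l.length + n := by exact_mod_cast hmain
  have hsumZ : (s : ℤ) + r = n := by exact_mod_cast hsum
  -- `s - r` is odd because `n` is, which improves `2 (s² + r²) ≥ n²` to `2 (s² + r²) ≥ n² + 1`
  have hdiff : (1 : ℤ) ≤ (s - r) ^ 2 := by
    have hne : (s : ℤ) - r ≠ 0 := by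
      obtain ⟨m, hm⟩ := hodd
      omega
    have := sq_pos_of_ne_zero hne
    omega
  have hfin : ((n : ℤ) - 1) ^ 2 ≤ 4 * l.length := by
    rw [← hsumZ] at hmainZ ⊢
    nlinarith
  have hfinR : ((n : ℝ) - 1) ^ 2 ≤ 4 * l.length := by exact_mod_cast hfin
  linarith
end

section
/- For every integer n ≥ 2, t(n) ≤ n - 2; equivalently, for every permutation π of ZMod n there exists 0 ≤ j < n such that π ∘ c^j has at least 2 cycles. -/
/-!
Given `π`, choose `j` with `π j = 0`. Then `π ∘ c^j` fixes `0`, so `{0}` is one of its orbits, and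
since `n ≥ 2` the point `1 ≠ 0` lies in another one. Hence `π ∘ c^j` has at least two cycles.
-/

/-- The number of cycles of a permutation `σ` (counting fixed points):
the number of orbits of the subgroup generated by `σ`. -/
noncomputable def cyc {α : Type*} (σ : Equiv.Perm α) : ℕ :=
  Nat.card (MulAction.orbitRel.Quotient (Subgroup.zpowers σ) α)

/-- The trivial cyclic shift `i ↦ i + 1` on `ZMod n`. -/
def c (n : ℕ) : Equiv.Perm (ZMod n) := Equiv.addRight 1

/-- `t n = max_{π} min_{0 ≤ j < n} (n - cyc (π ∘ c^j))`. -/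
noncomputable def t (n : ℕ) : ℕ :=
  sSup {m | ∃ π : Equiv.Perm (ZMod n),
    m = sInf {r | ∃ j < n, r = n - cyc (π * c n ^ j)}}

lemma c_pow_apply (n j : ℕ) (x : ZMod n) : (c n ^ j) x = x + j := by
  induction j with
  | zero => simp
  | succ k ih =>
    rw [pow_succ', Equiv.Perm.mul_apply, ih]
    simp [c, add_assoc]

lemma two_le_cyc_of_fixed {α : Type*} [Finite α] [Nontrivial α] (σ : Equiv.Perm α) (x : α)
    (hx : σ x = x) : 2 ≤ cyc σ := by
  obtain ⟨y, hy⟩ := exists_ne x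
  have : Nontrivial (MulAction.orbitRel.Quotient (Subgroup.zpowers σ) α) := by
    refine ⟨Quotient.mk _ y, Quotient.mk _ x, fun h => hy ?_⟩
    obtain ⟨⟨g, k, rfl⟩, hg⟩ := MulAction.orbitRel_apply.mp (Quotient.exact h)
    have hg' : (σ ^ k) x = y := hg
    rw [← hg', Equiv.Perm.zpow_apply_eq_self_of_apply_eq_self hx]
  have : Finite (MulAction.orbitRel.Quotient (Subgroup.zpowers σ) α) := Quotient.finite _
  exact Finite.one_lt_card

theorem t_le (n : ℕ) (hn : 2 ≤ n) : t n ≤ n - 2 := by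
  have : NeZero n := ⟨by omega⟩
  have : Fact (1 < n) := ⟨hn⟩
  refine csSup_le ⟨_, 1, rfl⟩ ?_
  rintro m ⟨π, rfl⟩
  have hfix : (π * c n ^ (π.symm 0).val) 0 = 0 := by
    simp [c_pow_apply]
  have hcyc := two_le_cyc_of_fixed _ 0 hfix
  exact le_trans (Nat.sInf_le (Set.mem_ofPred.mpr ⟨(π.symm 0).val, ZMod.val_lt _, rfl⟩))
    (Nat.sub_le_sub_left hcyc n)
end

section
/- If n = p^k where p is an odd prime and k ≥ 1, then t(n) ≥ n - k - 1. -/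
lemma exists_eq_pow_mul_unit {p k : ℕ} (hp : p.Prime) (y : ZMod (p ^ k)) :
    ∃ i < k + 1, ∃ u : (ZMod (p ^ k))ˣ, y = (p : ZMod (p ^ k)) ^ i * u := by
  have : NeZero (p ^ k) := ⟨(pow_pos hp.pos k).ne'⟩
  rcases Nat.eq_zero_or_pos y.val with h | h
  · refine ⟨k, by omega, 1, ?_⟩
    have h0 : ((p ^ k : ℕ) : ZMod (p ^ k)) = 0 := ZMod.natCast_self _
    rw [(ZMod.val_eq_zero y).1 h, Units.val_one, mul_one, ← Nat.cast_pow, h0]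
  · obtain ⟨i, m, hm, hy⟩ := Nat.exists_eq_pow_mul_and_not_dvd h.ne' p hp.ne_one
    have hmpos : 0 < m := Nat.pos_of_ne_zero (by rintro rfl; simp at hm)
    have hlt : p ^ i < p ^ k :=
      lt_of_le_of_lt (by rw [hy]; exact Nat.le_mul_of_pos_right _ hmpos) (ZMod.val_lt y)
    have hik : i < k := (Nat.pow_lt_pow_iff_right hp.one_lt).1 hlt
    have hc : m.Coprime (p ^ k) :=
      (Nat.Coprime.pow_left k ((Nat.Prime.coprime_iff_not_dvd hp).2 hm)).symm
    refine ⟨i, by omega, ZMod.unitOfCoprime m hc, ?_⟩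
    rw [ZMod.coe_unitOfCoprime, ← Nat.cast_pow, ← Nat.cast_mul, ← hy, ZMod.natCast_zmod_val]

/-- If every point is reached by powers of `σ` from the `d` points `f 0, …, f (d - 1)`, then these
points represent all the orbits. -/
lemma cyc_le_of_forall {α : Type*} (σ : Equiv.Perm α) (d : ℕ) (f : ℕ → α)
    (h : ∀ y, ∃ i < d, ∃ m : ℕ, (σ ^ m) (f i) = y) : cyc σ ≤ d := by
  have hs : Function.Surjective (fun i : Fin d =>
      (Quotient.mk'' (f i) : MulAction.orbitRel.Quotient (Subgroup.zpowers σ) α)) := by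
    intro q
    induction q using Quotient.inductionOn' with
    | h y =>
      obtain ⟨i, hi, m, rfl⟩ := h y
      refine ⟨⟨i, hi⟩, (Quotient.sound' ?_)⟩
      rw [MulAction.orbitRel_apply, MulAction.mem_orbit_symm]
      exact ⟨⟨σ ^ m, Subgroup.npow_mem_zpowers σ m⟩, rfl⟩
  simpa [cyc] using Nat.card_le_card_of_surjective _ hs

/-- The difference `g - 1` divides `g ^ m - 1 = -2`, which is a unit modulo an odd number. -/
lemma isUnit_generator_sub_one {n : ℕ} (hn : Odd n) (g : (ZMod n)ˣ)
    (hg : ∀ u, u ∈ Submonoid.powers g) : IsUnit ((g : ZMod n) - 1) := by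
  obtain ⟨m, hm⟩ := hg (-1)
  have hm' : (g : ZMod n) ^ m = -1 := by
    simpa using congrArg (Units.val) hm
  have h2 : IsUnit (2 : ZMod n) := by
    have := (ZMod.isUnit_iff_coprime 2 n).2 (Nat.coprime_two_left.2 hn)
    simpa using this
  refine isUnit_of_dvd_unit (?_ : _ ∣ (-2 : ZMod n)) h2.neg
  have := sub_dvd_pow_sub_pow (g : ZMod n) 1 m
  rw [one_pow, hm'] at this
  convert this using 1
  ring

lemma cyc_mul_generator_le {p k : ℕ} (hp : p.Prime) (g : (ZMod (p ^ k))ˣ)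
    (hg : ∀ u, u ∈ Submonoid.powers g) (h1 : IsUnit ((g : ZMod (p ^ k)) - 1)) (j : ℕ) :
    cyc (g.mulLeft * c (p ^ k) ^ j) ≤ k + 1 := by
  obtain ⟨v, hv⟩ := h1
  -- the fixed point of `x ↦ g * (x + j)`
  set x₀ : ZMod (p ^ k) := -(↑v⁻¹ * (g * j)) with hx₀
  have hfix : ((g : ZMod (p ^ k)) - 1) * x₀ = -(g * j) := by
    rw [← hv, hx₀, mul_neg, ← mul_assoc, Units.mul_inv, one_mul]
  have hpow : ∀ (m : ℕ) (z : ZMod (p ^ k)),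
      ((g.mulLeft * c (p ^ k) ^ j) ^ m) (x₀ + z) = x₀ + g ^ m * z := by
    intro m
    induction m with
    | zero => simp
    | succ m ih =>
      intro z
      rw [pow_succ', Equiv.Perm.mul_apply, ih, Equiv.Perm.mul_apply, c_pow_apply,
        Units.mulLeft_apply]
      linear_combination hfix
  refine cyc_le_of_forall _ _ (fun i => x₀ + (p : ZMod (p ^ k)) ^ i) fun y => ?_
  obtain ⟨i, hi, u, hu⟩ := exists_eq_pow_mul_unit hp (y - x₀)
  obtain ⟨m, rfl⟩ := hg u
  refine ⟨i, hi, m, ?_⟩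
  rw [hpow]
  push_cast at hu
  linear_combination -hu

theorem t_ge_prime_power (p k n : ℕ) (hp : p.Prime) (hodd : Odd p)
    (hk : 1 ≤ k) (hn : n = p ^ k) : n - k - 1 ≤ t n := by
  subst hn
  have hpos : 0 < p ^ k := pow_pos hp.pos k
  have : NeZero (p ^ k) := ⟨hpos.ne'⟩
  have : IsCyclic (ZMod (p ^ k))ˣ :=
    ZMod.isCyclic_units_of_prime_pow p hp (by rintro rfl; revert hodd; decide) k
  obtain ⟨g, hg⟩ := IsCyclic.exists_monoid_generator (α := (ZMod (p ^ k))ˣ)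
  have h1 := isUnit_generator_sub_one hodd.pow g hg
  refine le_trans (b := sInf {r | ∃ j < p ^ k, r = p ^ k - cyc (g.mulLeft * c (p ^ k) ^ j)})
    ?_ (le_csSup ?_ ⟨g.mulLeft, rfl⟩)
  · refine le_csInf ⟨_, 0, hpos, rfl⟩ ?_
    rintro r ⟨j, -, rfl⟩
    have := cyc_mul_generator_le hp g hg h1 j
    omega
  · refine ⟨p ^ k, ?_⟩
    rintro m ⟨π, rfl⟩
    have h0 : p ^ k - cyc (π * c (p ^ k) ^ 0) ∈
        {r | ∃ j < p ^ k, r = p ^ k - cyc (π * c (p ^ k) ^ j)} := ⟨0, hpos, rfl⟩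
    exact (Nat.sInf_le h0).trans (Nat.sub_le _ _)
end

section
/- If n ≥ 2 is a prime number, then t(n) = n - 2. -/
/-- A fixed point is a cycle of its own, so there is a second cycle as soon as there is a second
point. -/
lemma two_le_cyc {α : Type*} [Finite α] [Nontrivial α] (σ : Equiv.Perm α) (a : α)
    (ha : σ a = a) : 2 ≤ cyc σ := by
  obtain ⟨b, hb⟩ := exists_ne a
  have : Finite (MulAction.orbitRel.Quotient (Subgroup.zpowers σ) α) := Quotient.finite _
  refine Finite.one_lt_card_iff_nontrivial.2 ⟨Quotient.mk'' b, Quotient.mk'' a, fun h => hb ?_⟩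
  obtain ⟨⟨_, k, rfl⟩, hk⟩ := MulAction.orbitRel_apply.1 (Quotient.exact h)
  rw [← hk]
  exact Equiv.Perm.zpow_apply_eq_self_of_apply_eq_self ha k

/-- If some point `b` reaches every point other than `a`, there are at most two cycles. -/
lemma cyc_le_two {α : Type*} (σ : Equiv.Perm α) (a b : α)
    (h : ∀ x, x ≠ a → ∃ k : ℕ, (σ ^ k) b = x) : cyc σ ≤ 2 := by
  rw [← Nat.card_eq_two_iff.2 ⟨true, false, by simp, by ext x; cases x <;> simp⟩]
  refine Nat.card_le_card_of_surjective
    (fun i : Bool => (Quotient.mk'' (if i then a else b) :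
      MulAction.orbitRel.Quotient (Subgroup.zpowers σ) α)) fun q => ?_
  induction q using Quotient.inductionOn' with
  | h x =>
    by_cases hx : x = a
    · exact ⟨true, by simp [hx]⟩
    · obtain ⟨k, hk⟩ := h x hx
      refine ⟨false, Eq.symm (Quotient.sound ?_)⟩
      exact MulAction.orbitRel_apply.2 ⟨⟨σ ^ k, k, by simp⟩, hk⟩

lemma cyc_affine_le_two {F : Type*} [Field F] [Finite F] (g : Fˣ) (hg1 : (g : F) ≠ 1)
    (hg : ∀ u : Fˣ, u ∈ Submonoid.powers g) (j : F) (σ : Equiv.Perm F)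
    (hσ : ∀ x, σ x = g * (x + j)) : cyc σ ≤ 2 := by
  -- the fixed point of `x ↦ g (x + j)`
  obtain ⟨z, hz⟩ : ∃ z : F, g * (z + j) = z := by
    refine ⟨g * j / (1 - g), ?_⟩
    have : (1 - g : F) ≠ 0 := sub_ne_zero.2 hg1.symm
    field_simp
    ring
  have key : ∀ k : ℕ, (σ ^ k) (z + 1) = z + g ^ k := by
    intro k
    induction k with
    | zero => simp
    | succ k ih =>
      rw [pow_succ', Equiv.Perm.mul_apply, ih, hσ]
      linear_combination hz
  refine cyc_le_two σ z (z + 1) fun x hx => ?_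
  obtain ⟨k, hk⟩ := hg (Units.mk0 (x - z) (sub_ne_zero.2 hx))
  refine ⟨k, ?_⟩
  have h2 : (g : F) ^ k = x - z := by simpa using congrArg Units.val hk
  rw [key, h2]
  ring

lemma sInf_le_sub_two (n : ℕ) (hn : n.Prime) (π : Equiv.Perm (ZMod n)) :
    sInf {r | ∃ j < n, r = n - cyc (π * c n ^ j)} ≤ n - 2 := by
  have : Fact n.Prime := ⟨hn⟩
  have hle : sInf {r | ∃ j < n, r = n - cyc (π * c n ^ j)} ≤
      n - cyc (π * c n ^ (π.symm 0).val) :=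
    Nat.sInf_le ⟨(π.symm 0).val, ZMod.val_lt _, rfl⟩
  have := two_le_cyc (π * c n ^ (π.symm 0).val) 0 (by simp [c_pow_apply])
  omega

lemma exists_sub_two_le_sInf (n : ℕ) (hn : n.Prime) : ∃ π : Equiv.Perm (ZMod n),
    n - 2 ≤ sInf {r | ∃ j < n, r = n - cyc (π * c n ^ j)} := by
  have : Fact n.Prime := ⟨hn⟩
  rcases hn.two_le.eq_or_lt with h2 | h2
  · exact ⟨1, by omega⟩
  obtain ⟨g, hg⟩ := IsCyclic.exists_monoid_generator (α := (ZMod n)ˣ)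
  have hg1 : (g : ZMod n) ≠ 1 := by
    intro h
    obtain rfl : g = 1 := Units.ext h
    have h1 : Nat.card (ZMod n)ˣ = 1 :=
      Nat.card_eq_one_iff_unique.2 ⟨⟨fun a b => by
        obtain ⟨_, rfl⟩ := hg a
        obtain ⟨_, rfl⟩ := hg b
        simp⟩, ⟨1⟩⟩
    rw [Nat.card_eq_fintype_card, ZMod.card_units] at h1
    omega
  refine ⟨g.mulLeft, le_csInf ⟨_, 0, hn.pos, rfl⟩ ?_⟩
  rintro _ ⟨j, -, rfl⟩
  have := cyc_affine_le_two g hg1 hg (j : ZMod n) (g.mulLeft * c n ^ j)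
    (fun x => by simp [c_pow_apply])
  omega

theorem t_eq_of_prime (n : ℕ) (hn : n.Prime) : t n = n - 2 := by
  obtain ⟨π, hπ⟩ := exists_sub_two_le_sInf n hn
  refine IsGreatest.csSup_eq ⟨⟨π, le_antisymm hπ (sInf_le_sub_two n hn π)⟩, ?_⟩
  rintro _ ⟨τ, rfl⟩
  exact sInf_le_sub_two n hn τ
end

section
/- Let n > 2 and let π ∈ Perm(ZMod n) be such that the maximum of cyc(π ∘ c^j) over 0 ≤ j < n equals 2. Then for every 0 ≤ j < n, the permutation π ∘ c^j has exactly one fixed point and one cycle of length n - 1 (i.e., its cycle structure is (n-1, 1)). -/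
/-- Pigeonhole: if there are at most two cycles, two of any three points share one. -/
lemma sameCycle_of_cyc_le_two {α : Type*} [Finite α] {σ : Equiv.Perm α} (h : cyc σ ≤ 2)
    (x y z : α) : σ.SameCycle x y ∨ σ.SameCycle x z ∨ σ.SameCycle y z := by
  classical
  have key : ∀ u v : α, (Quotient.mk'' u : MulAction.orbitRel.Quotient (Subgroup.zpowers σ) α)
      = Quotient.mk'' v → σ.SameCycle u v := by
    intro u v huv
    obtain ⟨⟨g, k, rfl⟩, hg⟩ := MulAction.orbitRel_apply.1 (Quotient.eq''.1 huv)
    exact Equiv.Perm.SameCycle.symm ⟨k, hg⟩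
  by_contra! hne
  obtain ⟨hxy, hxz, hyz⟩ := hne
  have : Fintype (MulAction.orbitRel.Quotient (Subgroup.zpowers σ) α) := Fintype.ofFinite _
  have hcard : 2 < Fintype.card (MulAction.orbitRel.Quotient (Subgroup.zpowers σ) α) :=
    Fintype.two_lt_card_iff.2 ⟨Quotient.mk'' x, Quotient.mk'' y, Quotient.mk'' z,
      fun e => hxy (key _ _ e), fun e => hxz (key _ _ e), fun e => hyz (key _ _ e)⟩
  rw [cyc, Nat.card_eq_fintype_card] at h
  omega

lemma mul_c_pow_apply (n : ℕ) (π : Equiv.Perm (ZMod n)) (j : ℕ) (i : ZMod n) :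
    (π * c n ^ j) i = π (i + j) := by
  rw [Equiv.Perm.mul_apply]
  congr 1
  induction j with
  | zero => simp
  | succ k ih => rw [pow_succ', Equiv.Perm.mul_apply, ih]; simp [c, add_assoc]

lemma sum_card_fixed (n : ℕ) [NeZero n] (π : Equiv.Perm (ZMod n)) :
    ∑ j ∈ Finset.range n,
      (Finset.univ.filter fun i : ZMod n => (π * c n ^ j) i = i).card = n := by
  have hone : ∀ i : ZMod n,
      ((Finset.range n).filter fun j => (π * c n ^ j) i = i).card = 1 := by
    intro i
    refine Finset.card_eq_one.2 ⟨(π.symm i - i).val, ?_⟩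
    ext j
    simp only [Finset.mem_filter, Finset.mem_range, Finset.mem_singleton, mul_c_pow_apply]
    constructor
    · rintro ⟨hj, h⟩
      have : (j : ZMod n) = π.symm i - i := by
        rw [eq_sub_iff_add_eq', Equiv.eq_symm_apply]
        exact h
      rw [← this, ZMod.val_cast_of_lt hj]
    · rintro rfl
      exact ⟨ZMod.val_lt _, by simp⟩
  have := Finset.sum_card_bipartiteAbove_eq_sum_card_bipartiteBelow
    (s := Finset.range n) (t := (Finset.univ : Finset (ZMod n)))
    (fun j i => (π * c n ^ j) i = i)
  simp only [Finset.bipartiteAbove, Finset.bipartiteBelow] at this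
  rw [this, Finset.sum_congr rfl fun i _ => hone i]
  simp [ZMod.card]

lemma card_fixed_le_one {n : ℕ} [NeZero n] (hn : 2 < n) {σ : Equiv.Perm (ZMod n)}
    (h : cyc σ ≤ 2) : (Finset.univ.filter fun i : ZMod n => σ i = i).card ≤ 1 := by
  refine Finset.card_le_one.2 fun a ha b hb => ?_
  simp only [Finset.mem_filter, Finset.mem_univ, true_and] at ha hb
  by_contra hab
  obtain ⟨d, hd⟩ : ∃ d, d ∉ ({a, b} : Finset (ZMod n)) := by
    by_contra! hall
    have h1 := Finset.card_le_card (fun d _ => hall d : (Finset.univ : Finset (ZMod n)) ⊆ {a, b})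
    have h2 := Finset.card_le_two (a := a) (b := b)
    rw [Finset.card_univ, ZMod.card] at h1
    omega
  simp only [Finset.mem_insert, Finset.mem_singleton, not_or] at hd
  rcases sameCycle_of_cyc_le_two h a b d with h | h | h
  · exact hab (h.eq_of_left ha)
  · exact hd.1 (h.eq_of_left ha).symm
  · exact hd.2 (h.eq_of_left hb).symm

lemma card_fixed_eq_one {n : ℕ} [NeZero n] (hn : 2 < n) {π : Equiv.Perm (ZMod n)}
    (h : ∀ j < n, cyc (π * c n ^ j) ≤ 2) :
    ∀ j < n, (Finset.univ.filter fun i : ZMod n => (π * c n ^ j) i = i).card = 1 := by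
  have hle : ∀ j ∈ Finset.range n,
      (Finset.univ.filter fun i : ZMod n => (π * c n ^ j) i = i).card ≤ 1 :=
    fun j hj => card_fixed_le_one hn (h j (Finset.mem_range.1 hj))
  have heq := (Finset.sum_eq_sum_iff_of_le hle).1 (by rw [sum_card_fixed]; simp)
  exact fun j hj => heq j (Finset.mem_range.2 hj)

lemma cycleType_of_card_fixed_eq_one {n : ℕ} [NeZero n] (hn : 2 < n) {σ : Equiv.Perm (ZMod n)}
    (h : cyc σ ≤ 2) (h1 : (Finset.univ.filter fun i : ZMod n => σ i = i).card = 1) :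
    σ.cycleType = {n - 1} := by
  have hsupp : σ.support.card = n - 1 := by
    have := Finset.card_filter_add_card_filter_not (s := (Finset.univ : Finset (ZMod n)))
      (fun i => σ i = i)
    rw [h1, Finset.card_univ, ZMod.card] at this
    have h2 : σ.support = Finset.univ.filter fun i : ZMod n => ¬ σ i = i := by
      ext; simp
    rw [h2]
    omega
  obtain ⟨a, ha⟩ := Finset.card_eq_one.1 h1
  have ha' : σ a = a := by
    have : a ∈ Finset.univ.filter fun i : ZMod n => σ i = i := by simp [ha]
    simpa using this
  obtain ⟨x, hx⟩ : σ.support.Nonempty := Finset.card_pos.1 (by omega)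
  rw [Equiv.Perm.mem_support] at hx
  have hcyc : σ.IsCycle := by
    refine ⟨x, hx, fun y hy => ?_⟩
    rcases sameCycle_of_cyc_le_two h a x y with h | h | h
    · exact absurd (h.eq_of_left ha' ▸ ha') hx
    · exact absurd (h.eq_of_left ha' ▸ ha') hy
    · exact h
  rw [hcyc.cycleType, hsupp]

theorem cycle_structure_of_max_cyc_eq_two (n : ℕ) [NeZero n] (hn : 2 < n)
    (π : Equiv.Perm (ZMod n))
    (hmax : ((Finset.range n).sup fun j => cyc (π * c n ^ j)) = 2) :
    ∀ j < n, (Finset.univ.filter fun i : ZMod n => (π * c n ^ j) i = i).card = 1 ∧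
      (π * c n ^ j).cycleType = {n - 1} := by
  have hle : ∀ j < n, cyc (π * c n ^ j) ≤ 2 := fun j hj =>
    hmax ▸ Finset.le_sup (f := fun j => cyc (π * c n ^ j)) (Finset.mem_range.2 hj)
  intro j hj
  have h1 := card_fixed_eq_one hn hle j hj
  exact ⟨h1, cycleType_of_card_fixed_eq_one hn (hle j hj) h1⟩
end

section
/- If n = 2·p^k where p is an odd prime and k ≥ 1, then t(n) ≥ n - 2k - 2. -/
theorem cyc_le_of_cover {α ι : Type*} [Finite ι] (σ : Equiv.Perm α) (F : ι → α)
    (hF : ∀ y, ∃ i, ∃ m : ℕ, (σ ^ m) (F i) = y) : cyc σ ≤ Nat.card ι := by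
  unfold cyc
  refine Nat.card_le_card_of_surjective
    (fun i => (Quotient.mk _ (F i) : MulAction.orbitRel.Quotient (Subgroup.zpowers σ) α)) ?_
  intro y
  induction y using Quotient.inductionOn with
  | h y =>
    obtain ⟨i, m, rfl⟩ := hF y
    refine ⟨i, Eq.symm (Quotient.sound ?_)⟩
    exact ⟨⟨σ ^ m, Subgroup.npow_mem_zpowers σ m⟩, rfl⟩

/-- Some power of `g` is `-1`, so `g ≡ 1` modulo `p` would force `-1 = 1` in `ZMod p`. -/
theorem isUnit_one_sub_generator {p k : ℕ} (hp : p.Prime) (hodd : Odd p) (hk : 1 ≤ k)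
    (g : (ZMod (p ^ k))ˣ) (hg : ∀ u : (ZMod (p ^ k))ˣ, ∃ m : ℕ, g ^ m = u) :
    IsUnit (1 - (g : ZMod (p ^ k))) := by
  have : Fact p.Prime := ⟨hp⟩
  have : NeZero (p ^ k) := ⟨pow_ne_zero _ hp.ne_zero⟩
  have hdvd : p ∣ p ^ k := dvd_pow_self p (by omega)
  set a : ZMod (p ^ k) := 1 - (g : ZMod (p ^ k)) with ha
  rw [← ZMod.natCast_zmod_val a, ZMod.isUnit_iff_coprime]
  refine Nat.Coprime.pow_right k (Nat.Coprime.symm ((Nat.Prime.coprime_iff_not_dvd hp).2 ?_))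
  intro h
  let φ := ZMod.castHom hdvd (ZMod p)
  have h0 : φ a = 0 := by
    rw [← ZMod.natCast_zmod_val a, map_natCast]
    exact (ZMod.natCast_eq_zero_iff _ _).2 h
  have h1 : φ g = 1 := by
    rw [ha, map_sub, map_one, sub_eq_zero] at h0
    exact h0.symm
  obtain ⟨m, hm⟩ := hg (-1)
  have h2 : φ ((g : ZMod (p ^ k)) ^ m) = φ (-1) := by
    congr 1
    simpa using congrArg Units.val hm
  rw [map_pow, h1, one_pow, map_neg, map_one] at h2
  have : Fact (2 < p) := ⟨lt_of_le_of_ne hp.two_le (by rintro rfl; revert hodd; decide)⟩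
  exact ZMod.neg_one_ne_one h2.symm

theorem exists_eq_pow_mul_prime_pow {p k : ℕ} (hp : p.Prime)
    (g : (ZMod (p ^ k))ˣ) (hg : ∀ u : (ZMod (p ^ k))ˣ, ∃ m : ℕ, g ^ m = u)
    (x : ZMod (p ^ k)) :
    ∃ i : Fin (k + 1), ∃ m : ℕ, x = (g : ZMod (p ^ k)) ^ m * (p : ZMod (p ^ k)) ^ (i : ℕ) := by
  have : NeZero (p ^ k) := ⟨pow_ne_zero _ hp.ne_zero⟩
  by_cases hx : x.val = 0
  · refine ⟨Fin.last k, 0, ?_⟩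
    have : (p : ZMod (p ^ k)) ^ k = 0 := by
      exact_mod_cast ZMod.natCast_self (p ^ k)
    simp [this, (ZMod.val_eq_zero x).1 hx]
  · obtain ⟨i, u, hu, hxu⟩ := Nat.exists_eq_pow_mul_and_not_dvd hx p hp.ne_one
    have hik : i < k + 1 := by
      have h1 : p ^ i ≤ x.val := Nat.le_of_dvd (Nat.pos_of_ne_zero hx) ⟨u, hxu⟩
      have h2 : p ^ i < p ^ k := h1.trans_lt (ZMod.val_lt x)
      have := (Nat.pow_lt_pow_iff_right hp.one_lt).1 h2
      omega
    have hcop : u.Coprime (p ^ k) :=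
      Nat.Coprime.pow_right k (Nat.Coprime.symm ((Nat.Prime.coprime_iff_not_dvd hp).2 hu))
    obtain ⟨m, hm⟩ := hg (ZMod.unitOfCoprime u hcop)
    refine ⟨⟨i, hik⟩, m, ?_⟩
    have h3 : (g : ZMod (p ^ k)) ^ m = u := by
      simpa using congrArg Units.val hm
    rw [h3, ← ZMod.natCast_zmod_val x, hxu]
    push_cast
    ring

theorem exists_perm_cyc_le {p k : ℕ} (hp : p.Prime) (hodd : Odd p) (hk : 1 ≤ k) :
    ∃ π : Equiv.Perm (ZMod (2 * p ^ k)), ∀ j : ℕ, cyc (π * c (2 * p ^ k) ^ j) ≤ 2 * k + 2 := by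
  have : NeZero (p ^ k) := ⟨pow_ne_zero _ hp.ne_zero⟩
  have hcop : Nat.Coprime 2 (p ^ k) := (Nat.coprime_two_left).2 hodd.pow
  let e := ZMod.chineseRemainder hcop
  have : IsCyclic (ZMod (p ^ k))ˣ :=
    ZMod.isCyclic_units_of_prime_pow p hp (by rintro rfl; revert hodd; decide) k
  obtain ⟨g, hg'⟩ := IsCyclic.exists_monoid_generator (α := (ZMod (p ^ k))ˣ)
  have hg : ∀ u : (ZMod (p ^ k))ˣ, ∃ m : ℕ, g ^ m = u := fun u => hg' u
  let π : Equiv.Perm (ZMod (2 * p ^ k)) :=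
    (e.toEquiv.trans ((Equiv.refl _).prodCongr (Units.mulLeft g))).trans e.symm.toEquiv
  refine ⟨π, fun j => ?_⟩
  have hc : ∀ x, (c (2 * p ^ k) ^ j) x = x + j := by
    intro x
    induction j with
    | zero => simp
    | succ j ih => rw [pow_succ', Equiv.Perm.mul_apply, ih]; simp [c, add_assoc]
  set σ := π * c (2 * p ^ k) ^ j with hσ
  have hσe : ∀ x, e (σ x) = ((e x).1 + j, (g : ZMod (p ^ k)) * ((e x).2 + j)) := by
    intro x
    rw [hσ, Equiv.Perm.mul_apply, hc]
    simp [π]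
    rfl
  obtain ⟨v, hv⟩ := isUnit_one_sub_generator hp hodd hk g hg
  obtain ⟨x₀, hx₀⟩ : ∃ x₀ : ZMod (p ^ k), (g : ZMod (p ^ k)) * (x₀ + j) = x₀ := by
    refine ⟨(↑v⁻¹ : ZMod (p ^ k)) * (g * j), ?_⟩
    have h1 : (1 - (g : ZMod (p ^ k))) * ((↑v⁻¹ : ZMod (p ^ k)) * (g * j)) = g * j := by
      rw [← hv, Units.mul_inv_cancel_left]
    linear_combination -h1
  have hpow : ∀ (m : ℕ) (ε : ZMod 2) (y : ZMod (p ^ k)),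
      e ((σ ^ m) (e.symm (ε, x₀ + y))) = (ε + m * j, x₀ + (g : ZMod (p ^ k)) ^ m * y) := by
    intro m ε y
    induction m with
    | zero => simp
    | succ m ih =>
      rw [pow_succ', Equiv.Perm.mul_apply, hσe, ih]
      ext
      · push_cast; ring
      · dsimp only
        linear_combination hx₀
  have := cyc_le_of_cover σ
    (fun a : ZMod 2 × Fin (k + 1) => e.symm (a.1, x₀ + (p : ZMod (p ^ k)) ^ (a.2 : ℕ))) ?_
  · refine this.trans (le_of_eq ?_)
    simp
    ring
  · intro y
    obtain ⟨i, m, him⟩ := exists_eq_pow_mul_prime_pow hp g hg ((e y).2 - x₀)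
    refine ⟨((e y).1 - m * j, i), m, e.injective ?_⟩
    rw [hpow, ← him]
    ext <;> simp

theorem t_ge_two_mul_prime_power (p k n : ℕ) (hp : p.Prime) (hodd : Odd p)
    (hk : 1 ≤ k) (hn : n = 2 * p ^ k) : n - 2 * k - 2 ≤ t n := by
  subst hn
  have hpos : 0 < 2 * p ^ k := Nat.mul_pos two_pos (pow_pos hp.pos _)
  obtain ⟨π, hπ⟩ := exists_perm_cyc_le hp hodd hk
  refine le_trans ?_ (le_csSup ?_ ⟨π, rfl⟩)
  · refine le_csInf ⟨_, 0, hpos, rfl⟩ ?_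
    rintro r ⟨j, -, rfl⟩
    have := hπ j
    omega
  · refine ⟨2 * p ^ k, ?_⟩
    rintro m ⟨τ, rfl⟩
    refine le_trans (Nat.sInf_le (m := 2 * p ^ k - cyc (τ * c (2 * p ^ k) ^ 0)) ?_) (Nat.sub_le _ _)
    exact ⟨0, hpos, rfl⟩
end

section
/- If n = 2^k with k ≥ 2, then t(n) ≥ n - 2k + 1. -/
/-- A set of points meeting every cycle bounds the number of cycles. -/
lemma cyc_le_card {α : Type*} (σ : Equiv.Perm α) (S : Finset α)
    (h : ∀ x, ∃ s ∈ S, ∃ m : ℕ, (σ ^ m) s = x) : cyc σ ≤ S.card := by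
  have hs : Function.Surjective (fun s : S =>
      (Quotient.mk'' s.1 : MulAction.orbitRel.Quotient (Subgroup.zpowers σ) α)) := by
    intro q
    induction q using Quotient.inductionOn' with
    | h x =>
      obtain ⟨s, hsS, m, hm⟩ := h x
      refine ⟨⟨s, hsS⟩, Quotient.sound'
        ((MulAction.orbitRel (Subgroup.zpowers σ) α).symm' ?_)⟩
      exact ⟨⟨σ ^ m, Subgroup.npow_mem_zpowers σ m⟩, hm⟩
  simpa [cyc] using Nat.card_le_card_of_surjective _ hs

lemma three_pow_two_pow (k : ℕ) :
    ∃ u : ℤ, (3 : ℤ) ^ (2 ^ (k + 1)) = 1 + 2 ^ (k + 3) * (2 * u + 1) := by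
  induction k with
  | zero => exact ⟨0, by norm_num⟩
  | succ k ih =>
    obtain ⟨u, hu⟩ := ih
    refine ⟨u + 2 ^ (k + 1) * (2 * u + 1) ^ 2, ?_⟩
    rw [pow_succ 2 (k + 1), pow_mul, hu]
    ring

/-- The units modulo a power of two are generated by `3` and `-1`. The lift from `2 ^ (k + 3)` to
`2 ^ (k + 4)` multiplies, if necessary, by `3 ^ (2 ^ (k + 1)) ≡ 1 + 2 ^ (k + 3)`. -/
lemma odd_eq_pow_three (k : ℕ) (y : ℤ) (hy : Odd y) :
    ∃ d ∈ ({1, -1} : Finset ℤ), ∃ m : ℕ, (2 : ℤ) ^ k ∣ y - 3 ^ m * d := by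
  suffices H : ∀ k : ℕ, ∃ d ∈ ({1, -1} : Finset ℤ), ∃ m : ℕ, (2 : ℤ) ^ (k + 3) ∣ y - 3 ^ m * d by
    obtain ⟨d, hd, m, h⟩ := H k
    exact ⟨d, hd, m, (pow_dvd_pow 2 (by omega)).trans h⟩
  intro k
  induction k with
  | zero =>
    have h : y % 8 = 1 ∨ y % 8 = 3 ∨ y % 8 = 5 ∨ y % 8 = 7 := by
      obtain ⟨a, rfl⟩ := hy
      omega
    rcases h with h | h | h | h
    · exact ⟨1, by simp, 0, by norm_num; omega⟩
    · exact ⟨1, by simp, 1, by norm_num; omega⟩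
    · exact ⟨-1, by simp, 1, by norm_num; omega⟩
    · exact ⟨-1, by simp, 0, by norm_num; omega⟩
  | succ k ih =>
    obtain ⟨d, hd, m, w, hw⟩ := ih
    have hdo : Odd d := by
      simp only [Finset.mem_insert, Finset.mem_singleton] at hd
      rcases hd with rfl | rfl <;> decide
    have h3 : Odd ((3 : ℤ) ^ m * d) := ((by decide : Odd (3 : ℤ)).pow).mul hdo
    rcases Int.even_or_odd' w with ⟨v, rfl | rfl⟩
    · exact ⟨d, hd, m, v, by rw [hw]; ring⟩
    · obtain ⟨u, hu⟩ := three_pow_two_pow k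
      obtain ⟨e, he⟩ := h3
      refine ⟨d, hd, m + 2 ^ (k + 1), v - 2 * u * e - u - e, ?_⟩
      have h1 : y = (2 * e + 1) + 2 ^ (k + 3) * (2 * v + 1) := by
        rw [← he, ← hw]; ring
      have h2 : (3 : ℤ) ^ (m + 2 ^ (k + 1)) * d = (2 * e + 1) * (1 + 2 ^ (k + 3) * (2 * u + 1)) := by
        rw [pow_add, hu, ← he]; ring
      rw [h1, h2]
      ring

/-- Multiplication by `3` modulo `2 ^ k` has at most `2 k - 1` orbits (indexed here by `k + 2`). The
even residues modulo `2 ^ (k + 1)` are twice those modulo `2 ^ k`; the odd ones form two orbits. -/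
lemma exists_reps (k : ℕ) : ∃ D : Finset ℤ, D.card ≤ 2 * k + 3 ∧
    ∀ z : ℤ, ∃ d ∈ D, ∃ m : ℕ, (2 : ℤ) ^ (k + 2) ∣ z - 3 ^ m * d := by
  induction k with
  | zero =>
    refine ⟨{0, 1, 2}, by decide, fun z => ?_⟩
    have h : z % 4 = 0 ∨ z % 4 = 1 ∨ z % 4 = 2 ∨ z % 4 = 3 := by omega
    rcases h with h | h | h | h
    · exact ⟨0, by simp, 0, by norm_num; omega⟩
    · exact ⟨1, by simp, 0, by norm_num; omega⟩
    · exact ⟨2, by simp, 0, by norm_num; omega⟩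
    · exact ⟨1, by simp, 1, by norm_num; omega⟩
  | succ k ih =>
    obtain ⟨D, hD, h⟩ := ih
    refine ⟨D.image (2 * ·) ∪ {1, -1}, ?_, fun z => ?_⟩
    · have h1 := Finset.card_union_le (D.image (2 * ·)) ({1, -1} : Finset ℤ)
      have h2 : (D.image (2 * ·)).card ≤ D.card := Finset.card_image_le
      have h3 : ({1, -1} : Finset ℤ).card = 2 := by decide
      omega
    · rcases Int.even_or_odd' z with ⟨v, hv | hv⟩
      · obtain ⟨d, hd, m, w, hw⟩ := h v
        refine ⟨2 * d, Finset.mem_union_left _ (Finset.mem_image_of_mem _ hd), m, w, ?_⟩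
        rw [hv, show 2 * v - 3 ^ m * (2 * d) = 2 * (v - 3 ^ m * d) by ring, hw]
        ring
      · obtain ⟨d, hd, m, hm⟩ := odd_eq_pow_three (k + 1 + 2) z ⟨v, hv⟩
        exact ⟨d, Finset.mem_union_right _ hd, m, hm⟩

/-- In the coordinate `2 x + 3 j`, the map `x ↦ 3 (x + j)` is multiplication by `3`. -/
lemma affine_pow (n : ℕ) (σ : Equiv.Perm (ZMod n)) (j : ℤ)
    (hσ : ∀ x, σ x = 3 * (x + (j : ZMod n))) (a : ℤ) (m : ℕ) :
    ∃ b : ℤ, (σ ^ m) (a : ZMod n) = (b : ZMod n) ∧ 2 * b + 3 * j = 3 ^ m * (2 * a + 3 * j) := by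
  induction m with
  | zero => exact ⟨a, by simp, by ring⟩
  | succ m ih =>
    obtain ⟨b, hb, he⟩ := ih
    refine ⟨3 * (b + j), ?_, ?_⟩
    · rw [pow_succ', Equiv.Perm.mul_apply, hb, hσ]
      push_cast
      ring
    · rw [pow_succ', mul_assoc, ← he]
      ring

/-- Representatives `d` for the orbits of multiplication by `3` on the residues `2 x + 3 j` modulo
`2 ^ (k + 1)` pull back to representatives `(d - 3 j) / 2` for the cycles of `x ↦ 3 (x + j)`. -/
lemma cyc_affine_le (k : ℕ) (σ : Equiv.Perm (ZMod (2 ^ k))) (j : ℤ)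
    (hσ : ∀ x, σ x = 3 * (x + (j : ZMod (2 ^ k)))) (D : Finset ℤ)
    (hpar : ∀ d ∈ D, (2 : ℤ) ∣ d - 3 * j)
    (hD : ∀ x : ℤ, ∃ d ∈ D, ∃ m : ℕ, (2 : ℤ) ^ (k + 1) ∣ (2 * x + 3 * j) - 3 ^ m * d) :
    cyc σ ≤ D.card := by
  refine (cyc_le_card σ (D.image fun d => (((d - 3 * j) / 2 : ℤ) : ZMod (2 ^ k))) ?_).trans
    Finset.card_image_le
  intro x
  obtain ⟨x, rfl⟩ := ZMod.intCast_surjective x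
  obtain ⟨d, hd, m, w, hw⟩ := hD x
  refine ⟨_, Finset.mem_image_of_mem _ hd, m, ?_⟩
  obtain ⟨b, hb, he⟩ := affine_pow _ σ j hσ ((d - 3 * j) / 2) m
  rw [hb, eq_comm, ← sub_eq_zero, ← Int.cast_sub, ZMod.intCast_zmod_eq_zero_iff_dvd]
  rw [Int.mul_ediv_cancel' (hpar d hd), sub_add_cancel] at he
  refine ⟨w, ?_⟩
  push_cast
  rw [← he, pow_succ] at hw
  linarith

theorem t_ge_two_pow (k n : ℕ) (hk : 2 ≤ k) (hn : n = 2 ^ k) :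
    n - 2 * k + 1 ≤ t n := by
  subst hn
  have hlt : 2 * k ≤ 2 ^ k := by
    have h : ∀ i : ℕ, 2 * (i + 2) ≤ 2 ^ (i + 2) := by
      intro i
      induction i with
      | zero => norm_num
      | succ i ih => rw [show i + 1 + 2 = (i + 2) + 1 by ring, pow_succ]; omega
    obtain ⟨i, rfl⟩ := Nat.exists_eq_add_of_le' hk
    exact h i
  have hcop : Nat.Coprime 3 (2 ^ k) := Nat.Coprime.pow_right k (by decide)
  let π : Equiv.Perm (ZMod (2 ^ k)) := Units.mulLeft (ZMod.unitOfCoprime 3 hcop)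
  have hcyc : ∀ j : ℕ, cyc (π * c (2 ^ k) ^ j) ≤ 2 * k - 1 := by
    intro j
    have hσ : ∀ x, (π * c (2 ^ k) ^ j) x = 3 * (x + ((j : ℤ) : ZMod (2 ^ k))) := by
      intro x
      simp [π, c, Equiv.Perm.mul_apply]
    rcases Int.even_or_odd' (j : ℤ) with ⟨i, hi | hi⟩
    · obtain ⟨l, rfl⟩ := Nat.exists_eq_add_of_le' hk
      obtain ⟨D, hDc, hD⟩ := exists_reps l
      refine (cyc_affine_le _ _ j hσ (D.image (2 * ·)) ?_ ?_).trans
        (Finset.card_image_le.trans (by omega))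
      · intro d hd
        obtain ⟨e, -, rfl⟩ := Finset.mem_image.1 hd
        exact ⟨e - 3 * i, by rw [hi]; ring⟩
      · intro x
        obtain ⟨d, hd, m, w, hw⟩ := hD (x + 3 * i)
        refine ⟨2 * d, Finset.mem_image_of_mem _ hd, m, w, ?_⟩
        rw [hi, show 2 * x + 3 * (2 * i) - 3 ^ m * (2 * d) = 2 * (x + 3 * i - 3 ^ m * d) by ring, hw]
        ring
    · refine (cyc_affine_le _ _ j hσ {1, -1} ?_ ?_).trans (Finset.card_le_two.trans (by omega))
      · intro d hd
        simp only [Finset.mem_insert, Finset.mem_singleton] at hd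
        omega
      · intro x
        exact odd_eq_pow_three _ _ ⟨x + 3 * i + 1, by rw [hi]; ring⟩
  have hbdd : BddAbove {m | ∃ π : Equiv.Perm (ZMod (2 ^ k)),
      m = sInf {r | ∃ j < 2 ^ k, r = 2 ^ k - cyc (π * c (2 ^ k) ^ j)}} := by
    refine ⟨2 ^ k, ?_⟩
    rintro m ⟨ρ, rfl⟩
    have h : 2 ^ k - cyc (ρ * c (2 ^ k) ^ 0) ∈
        {r | ∃ j < 2 ^ k, r = 2 ^ k - cyc (ρ * c (2 ^ k) ^ j)} := ⟨0, by positivity, rfl⟩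
    exact (Nat.sInf_le h).trans (Nat.sub_le _ _)
  refine le_trans ?_ (le_csSup hbdd ⟨π, rfl⟩)
  refine le_csInf ⟨_, 0, by positivity, rfl⟩ ?_
  rintro r ⟨j, -, rfl⟩
  have := hcyc j
  omega
end

section
/- For every integer n ≥ 2 and every integer k ≥ 0, the probability that a uniformly random permutation of an n-element set has exactly k+1 cycles is at most (ln(n-1) + 1)^k / (n · k!); equivalently, the number of permutations π of Fin n with cyc(π) = k+1 is at most n! · (ln(n-1) + 1)^k / (n · k!). -/
/-! ### Counting cycles -/

/-- The set of cycles of `σ`, as the quotient by the relation generated by `x ∼ σ x`. Maps out of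
it are the functions `f` with `f (σ x) = f x`. -/
abbrev Cycles {α : Type*} (σ : Equiv.Perm α) : Type _ := Quot fun x y => y = σ x

theorem Cycles.mk_apply {α : Type*} (σ : Equiv.Perm α) (x : α) :
    (Quot.mk _ (σ x) : Cycles σ) = Quot.mk _ x :=
  (Quot.sound (r := fun x y => y = σ x) rfl).symm

theorem Cycles.mk_zpow_apply {α : Type*} (σ : Equiv.Perm α) (z : ℤ) (x : α) :
    (Quot.mk _ ((σ ^ z) x) : Cycles σ) = Quot.mk _ x := by
  induction z with
  | zero => simp
  | succ i ih => rw [add_comm, zpow_add, zpow_one, Equiv.Perm.mul_apply, Cycles.mk_apply, ih]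
  | pred i ih =>
    rw [← ih, ← Cycles.mk_apply, ← Equiv.Perm.mul_apply, ← zpow_one_add]
    congr 4
    ring

theorem cyc_eq_card_cycles {α : Type*} (σ : Equiv.Perm α) : cyc σ = Nat.card (Cycles σ) := by
  refine Nat.card_congr
    { toFun := Quotient.lift (fun x => (Quot.mk _ x : Cycles σ)) ?_
      invFun := Quot.lift (fun x => Quotient.mk _ x) ?_
      left_inv := ?_
      right_inv := ?_ }
  · rintro _ y ⟨⟨_, z, rfl⟩, rfl⟩
    exact Cycles.mk_zpow_apply σ z y
  · rintro x _ rfl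
    refine (Quotient.sound ?_).symm
    exact ⟨⟨σ, Subgroup.mem_zpowers σ⟩, rfl⟩
  · rintro ⟨x⟩
    rfl
  · rintro ⟨x⟩
    rfl

open Equiv.Perm in
theorem cyc_decomposeFin_symm_zero {n : ℕ} (e : Equiv.Perm (Fin n)) :
    cyc (decomposeFin.symm (0, e)) = cyc e + 1 := by
  rw [cyc_eq_card_cycles, cyc_eq_card_cycles, ← Finite.card_option]
  refine Nat.card_congr
    { toFun := Quot.lift (Fin.cases none fun x => some (Quot.mk _ x)) ?_
      invFun := fun o => o.elim (Quot.mk _ 0) (Quot.lift (fun x => Quot.mk _ x.succ) ?_)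
      left_inv := ?_
      right_inv := ?_ }
  · rintro x _ rfl
    induction x using Fin.cases with
    | zero => simp
    | succ x => simp [Cycles.mk_apply]
  · rintro x _ rfl
    rw [← Cycles.mk_apply]
    simp
  · rintro ⟨x⟩
    induction x using Fin.cases <;> rfl
  · rintro (_ | ⟨⟨x⟩⟩) <;> rfl

open Equiv.Perm in
theorem cyc_decomposeFin_symm_succ {n : ℕ} (q : Fin n) (e : Equiv.Perm (Fin n)) :
    cyc (decomposeFin.symm (q.succ, e)) = cyc e := by
  have h0 : (Quot.mk _ 0 : Cycles (decomposeFin.symm (q.succ, e))) = Quot.mk _ q.succ := by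
    rw [← Cycles.mk_apply, decomposeFin_symm_apply_zero]
  rw [cyc_eq_card_cycles, cyc_eq_card_cycles]
  refine Nat.card_congr
    { toFun := Quot.lift (Fin.cases (Quot.mk _ q) fun x => Quot.mk _ x) ?_
      invFun := Quot.lift (fun x => Quot.mk _ x.succ) ?_
      left_inv := ?_
      right_inv := ?_ }
  · rintro x _ rfl
    induction x using Fin.cases with
    | zero => simp
    | succ x =>
      rw [decomposeFin_symm_apply_succ]
      by_cases h : e x = q
      · subst h
        simp [Cycles.mk_apply]
      · rw [Equiv.swap_apply_of_ne_of_ne (Fin.succ_ne_zero _) (by simpa using h)]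
        simp [Cycles.mk_apply]
  · rintro x _ rfl
    rw [← Cycles.mk_apply, decomposeFin_symm_apply_succ]
    by_cases h : e x = q
    · rw [h, Equiv.swap_apply_right, h0]
    · rw [Equiv.swap_apply_of_ne_of_ne (Fin.succ_ne_zero _) (by simpa using h)]
  · rintro ⟨x⟩
    induction x using Fin.cases with
    | zero => exact h0.symm
    | succ x => rfl
  · rintro ⟨x⟩
    rfl

theorem card_cyc_eq_stirlingFirst (n k : ℕ) :
    (Finset.univ.filter fun π : Equiv.Perm (Fin n) => cyc π = k).card = n.stirlingFirst k := by
  induction n generalizing k with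
  | zero =>
    have h (π : Equiv.Perm (Fin 0)) : cyc π = 0 := by
      rw [cyc_eq_card_cycles]
      have : IsEmpty (Cycles π) := ⟨by rintro ⟨x⟩; exact x.elim0⟩
      simp
    cases k <;> simp [h]
  | succ n ih =>
    simp only [Finset.card_filter] at ih ⊢
    rw [Fintype.sum_equiv Equiv.Perm.decomposeFin _
      (fun p => if cyc (Equiv.Perm.decomposeFin.symm p) = k then 1 else 0) (by simp),
      Fintype.sum_prod_type, Fin.sum_univ_succ]
    simp only [cyc_decomposeFin_symm_zero, cyc_decomposeFin_symm_succ, ih]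
    cases k with
    | zero => cases n <;> simp
    | succ k => simp [ih, Nat.stirlingFirst_succ_succ, add_comm]

/-! ### Bounding Stirling numbers -/

theorem stirlingFirst_le_harmonic (m k : ℕ) :
    ((m + 1).stirlingFirst (k + 1) : ℝ) ≤ m.factorial * (harmonic m : ℝ) ^ k / k.factorial := by
  induction m generalizing k with
  | zero => cases k <;> simp [Nat.stirlingFirst_succ_succ]
  | succ m ih =>
    cases k with
    | zero => simp [Nat.stirlingFirst_one_right]
    | succ k =>
      have hH : (0 : ℝ) ≤ harmonic m := by
        have : (0 : ℚ) ≤ harmonic m := Finset.sum_nonneg fun i _ => by positivity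
        exact_mod_cast this
      have hm : (0 : ℝ) < (m : ℝ) + 1 := by positivity
      have hk : (0 : ℝ) < (k : ℝ) + 1 := by positivity
      rw [Nat.stirlingFirst_succ_succ, harmonic_succ]
      push_cast
      set x : ℝ := (harmonic m : ℝ)
      set h : ℝ := ((m : ℝ) + 1)⁻¹ with hh
      have hh0 : 0 ≤ h := by positivity
      have bern : x ^ (k + 1) + ((k : ℝ) + 1) * x ^ k * h ≤ (x + h) ^ (k + 1) := by
        have := pow_add_mul_le_add_pow (a := x) (b := h) hH (by linarith) (k + 1)
        simp only [Nat.add_sub_cancel] at this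
        push_cast at this
        linarith
      calc _ ≤ ((m : ℝ) + 1) * (m.factorial * x ^ (k + 1) / (k + 1).factorial)
            + m.factorial * x ^ k / k.factorial := by
              gcongr
              · exact ih (k + 1)
              · exact ih k
        _ = (m + 1).factorial * (x ^ (k + 1) + ((k : ℝ) + 1) * x ^ k * h)
            / (k + 1).factorial := by
              rw [hh]
              push_cast [Nat.factorial_succ]
              field_simp
        _ ≤ _ := by gcongr

/-- The number of permutations of an `n`-element set with exactly `k + 1`
cycles is at most `n! · (ln(n-1) + 1)^k / (n · k!)`; equivalently the
probability that a uniformly random permutation has exactly `k + 1` cycles is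
at most `(ln(n-1) + 1)^k / (n · k!)`. -/
theorem count_perms_with_cycles_le (n k : ℕ) (hn : 2 ≤ n) :
    ((Finset.univ.filter fun π : Equiv.Perm (Fin n) => cyc π = k + 1).card : ℝ)
      ≤ (n.factorial : ℝ) * (Real.log ((n : ℝ) - 1) + 1) ^ k
        / ((n : ℝ) * k.factorial) := by
  obtain ⟨m, rfl⟩ : ∃ m, n = m + 1 := ⟨n - 1, by omega⟩
  rw [card_cyc_eq_stirlingFirst]
  have hH : (0 : ℝ) ≤ harmonic m := by
    have : (0 : ℚ) ≤ harmonic m := Finset.sum_nonneg fun i _ => by positivity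
    exact_mod_cast this
  calc _ ≤ m.factorial * (harmonic m : ℝ) ^ k / k.factorial := stirlingFirst_le_harmonic m k
    _ ≤ m.factorial * (Real.log m + 1) ^ k / k.factorial := by
      gcongr
      linarith [harmonic_le_one_add_log m]
    _ = _ := by
      push_cast [Nat.factorial_succ]
      rw [add_sub_cancel_right]
      field_simp
end

section
/- Let p be an odd prime, k ≥ 1, and let g be a unit of ZMod p^k that generates the unit group (ZMod p^k)^× (a primitive root). Then the permutation of ZMod p^k given by multiplication by g has exactly k + 1 cycles (counting fixed points). -/
lemma mulLeft_zpow_apply {R : Type*} [Monoid R] (g : Rˣ) (n : ℤ) (x : R) :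
    (Units.mulLeft g ^ n) x = ((g ^ n : Rˣ) : R) * x := by
  have h : ∀ u : Rˣ, Units.mulLeft u = MulAction.toPermHom Rˣ R u := fun u => by
    ext y
    rfl
  rw [h, ← map_zpow, ← h]
  rfl

/-- When `g` generates the unit group, the cycles of multiplication by `g` are the orbits of the
whole unit group. -/
lemma orbitRel_mulLeft_iff {R : Type*} [Monoid R] (g : Rˣ)
    (hg : ∀ x : Rˣ, x ∈ Subgroup.zpowers g) (x y : R) :
    MulAction.orbitRel (Subgroup.zpowers (Units.mulLeft g)) R x y ↔
      ∃ u : Rˣ, x = u * y := by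
  rw [MulAction.orbitRel_apply, MulAction.mem_orbit_iff]
  constructor
  · rintro ⟨⟨σ, hσ⟩, rfl⟩
    obtain ⟨n, rfl⟩ := Subgroup.mem_zpowers_iff.1 hσ
    exact ⟨g ^ n, mulLeft_zpow_apply g n y⟩
  · rintro ⟨u, rfl⟩
    obtain ⟨n, rfl⟩ := Subgroup.mem_zpowers_iff.1 (hg u)
    exact ⟨⟨Units.mulLeft g ^ n, Subgroup.zpow_mem_zpowers _ n⟩, mulLeft_zpow_apply g n y⟩

lemma exists_unit_mul_prime_pow {p k : ℕ} (hp : p.Prime) (x : ZMod (p ^ k)) :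
    ∃ i ≤ k, ∃ u : (ZMod (p ^ k))ˣ, (p : ZMod (p ^ k)) ^ i = u * x := by
  have : NeZero (p ^ k) := ⟨pow_ne_zero _ hp.ne_zero⟩
  by_cases hx : x = 0
  · refine ⟨k, le_rfl, 1, ?_⟩
    rw [hx, mul_zero, ← Nat.cast_pow, ZMod.natCast_self]
  · have hv : x.val ≠ 0 := fun h => hx ((ZMod.val_eq_zero x).1 h)
    obtain ⟨i, m, hm, hxm⟩ := Nat.exists_eq_pow_mul_and_not_dvd hv p hp.ne_one
    have hcop : m.Coprime (p ^ k) := (((hp.coprime_iff_not_dvd).2 hm).symm).pow_right k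
    refine ⟨i, ?_, (ZMod.unitOfCoprime m hcop)⁻¹, ?_⟩
    · have h1 : p ^ i ≤ x.val := Nat.le_of_dvd (Nat.pos_of_ne_zero hv) ⟨m, hxm⟩
      exact ((Nat.pow_lt_pow_iff_right hp.one_lt).1 (h1.trans_lt (ZMod.val_lt x))).le
    · rw [Units.eq_inv_mul_iff_mul_eq, ZMod.coe_unitOfCoprime, ← ZMod.natCast_zmod_val x, hxm]
      push_cast
      ring

lemma le_of_prime_pow_eq_unit_mul {p k i j : ℕ} (hp : p.Prime) (hj : j ≤ k)
    (u : (ZMod (p ^ k))ˣ) (h : (p : ZMod (p ^ k)) ^ i = u * (p : ZMod (p ^ k)) ^ j) :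
    j ≤ i := by
  -- Multiplication by `p ^ (k - j)` kills the right-hand side, hence also `p ^ i`.
  have h0 : ((p ^ (i + (k - j)) : ℕ) : ZMod (p ^ k)) = 0 := by
    rw [Nat.cast_pow, pow_add, h, mul_assoc, ← pow_add, Nat.add_sub_cancel' hj, ← Nat.cast_pow,
      ZMod.natCast_self, mul_zero]
  rw [ZMod.natCast_eq_zero_iff, Nat.pow_dvd_pow_iff_le_right hp.one_lt] at h0
  omega

/-- If `g` is a primitive root modulo `p^k` (`p` an odd prime, `k ≥ 1`), then
multiplication by `g` on `ZMod p^k` has exactly `k + 1` cycles. -/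
theorem cyc_mul_primitive_root (p k : ℕ) (hp : p.Prime) (hodd : Odd p)
    (hk : 1 ≤ k) (g : (ZMod (p ^ k))ˣ)
    (hg : ∀ x : (ZMod (p ^ k))ˣ, x ∈ Subgroup.zpowers g) :
    cyc (Units.mulLeft g) = k + 1 := by
  let f : Fin (k + 1) →
      MulAction.orbitRel.Quotient (Subgroup.zpowers (Units.mulLeft g)) (ZMod (p ^ k)) :=
    fun i => Quotient.mk _ ((p : ZMod (p ^ k)) ^ (i : ℕ))
  have hf : Function.Bijective f := by
    constructor
    · have key : ∀ i j : Fin (k + 1), f i = f j → (j : ℕ) ≤ i := fun i j hij => by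
        obtain ⟨u, hu⟩ := (orbitRel_mulLeft_iff g hg _ _).1 (Quotient.exact hij)
        exact le_of_prime_pow_eq_unit_mul hp (Nat.lt_succ_iff.1 j.2) u hu
      exact fun i j hij => Fin.ext (le_antisymm (key j i hij.symm) (key i j hij))
    · intro q
      induction q using Quotient.inductionOn with
      | h x =>
        obtain ⟨i, hi, hu⟩ := exists_unit_mul_prime_pow hp x
        exact ⟨⟨i, Nat.lt_succ_iff.2 hi⟩, Quotient.sound ((orbitRel_mulLeft_iff g hg _ _).2 hu)⟩
  rw [cyc, ← Nat.card_eq_of_bijective f hf, Nat.card_fin]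
end

section
/- For every integer n ≥ 2, the number of permutations π of Fin n with cyc(π) > ⌈e·(ln n + 1)⌉ is strictly less than n!/n = (n-1)!; equivalently, the probability that a uniformly random permutation of an n-element set has more than ⌈e·(ln n + 1)⌉ cycles is less than 1/n. -/
open Equiv Equiv.Perm in
lemma orbit_mk_eq_iff {α : Type*} (σ : Equiv.Perm α) (a b : α) :
    (Quotient.mk _ a : MulAction.orbitRel.Quotient (Subgroup.zpowers σ) α) = Quotient.mk _ b ↔
      σ.SameCycle a b := by
  rw [Quotient.eq, MulAction.orbitRel_apply, MulAction.mem_orbit_iff]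
  constructor
  · rintro ⟨⟨_, k, rfl⟩, h⟩
    exact SameCycle.symm ⟨k, h⟩
  · intro h
    obtain ⟨k, hk⟩ := h.symm
    exact ⟨⟨σ ^ k, k, rfl⟩, hk⟩

/-- Inserting the new point `0` never separates two points lying in a common cycle. -/
lemma sameCycle_decomposeFin {n : ℕ} (p : Fin (n + 1)) (τ : Equiv.Perm (Fin n)) {a b : Fin n}
    (h : τ.SameCycle a b) :
    (Equiv.Perm.decomposeFin.symm (p, τ)).SameCycle a.succ b.succ := by
  obtain ⟨k, -, rfl⟩ := h.exists_pow_eq'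
  clear h
  induction k with
  | zero => exact Equiv.Perm.SameCycle.refl _ _
  | succ k ih =>
    refine ih.trans ?_
    rw [pow_succ', Equiv.Perm.mul_apply]
    generalize (τ ^ k) a = x
    by_cases hp : (τ x).succ = p
    · -- here `0` sits between `x` and `τ x`, so two steps are needed
      refine ⟨2, ?_⟩
      rw [zpow_ofNat, pow_two, Equiv.Perm.mul_apply, Equiv.Perm.decomposeFin_symm_apply_succ, hp,
        Equiv.swap_apply_right, Equiv.Perm.decomposeFin_symm_apply_zero]
    · refine ⟨1, ?_⟩
      rw [zpow_one, Equiv.Perm.decomposeFin_symm_apply_succ,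
        Equiv.swap_apply_of_ne_of_ne (Fin.succ_ne_zero _) hp]

/-- The map on cycles induced by inserting the new point `0` just before `p`, or as a fixed point
if `p = 0`; old points are relabelled by `Fin.succ`. -/
noncomputable def insertOrbit {n : ℕ} (p : Fin (n + 1)) (τ : Equiv.Perm (Fin n)) :
    MulAction.orbitRel.Quotient (Subgroup.zpowers τ) (Fin n) →
    MulAction.orbitRel.Quotient
      (Subgroup.zpowers (Equiv.Perm.decomposeFin.symm (p, τ))) (Fin (n + 1)) :=
  fun q => Quotient.liftOn q (fun a => Quotient.mk _ a.succ) fun a b h =>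
    (orbit_mk_eq_iff _ _ _).2
      (sameCycle_decomposeFin p τ ((orbit_mk_eq_iff τ a b).1 (Quotient.sound h)))

lemma cyc_decomposeFin_zero {n : ℕ} (τ : Equiv.Perm (Fin n)) :
    cyc (Equiv.Perm.decomposeFin.symm (0, τ)) ≤ cyc τ + 1 := by
  unfold cyc
  rw [← Finite.card_option]
  refine Nat.card_le_card_of_surjective
    (fun q => q.elim (Quotient.mk _ 0) (insertOrbit 0 τ)) fun q => ?_
  induction q using Quotient.inductionOn with
  | h x =>
    cases x using Fin.cases with
    | zero => exact ⟨none, rfl⟩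
    | succ i => exact ⟨some (Quotient.mk _ i), rfl⟩

lemma cyc_decomposeFin_succ {n : ℕ} (i : Fin n) (τ : Equiv.Perm (Fin n)) :
    cyc (Equiv.Perm.decomposeFin.symm (i.succ, τ)) ≤ cyc τ := by
  unfold cyc
  refine Nat.card_le_card_of_surjective (insertOrbit i.succ τ) fun q => ?_
  induction q using Quotient.inductionOn with
  | h x =>
    cases x using Fin.cases with
    | zero =>
      refine ⟨Quotient.mk _ i, (orbit_mk_eq_iff _ _ _).2 (Equiv.Perm.SameCycle.symm ⟨1, ?_⟩)⟩
      rw [zpow_one, Equiv.Perm.decomposeFin_symm_apply_zero]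
    | succ j => exact ⟨Quotient.mk _ j, rfl⟩

/-- Upper half of the generating function identity `∑ π, x ^ cyc π = x (x + 1) ⋯ (x + n - 1)`
at `x = e`. -/
lemma sum_exp_cyc_le (n : ℕ) :
    ∑ π : Equiv.Perm (Fin n), Real.exp (cyc π) ≤
      ∏ i ∈ Finset.range n, (Real.exp 1 + i) := by
  induction n with
  | zero => simp [cyc]
  | succ n ih =>
    rw [← Equiv.Perm.decomposeFin.symm.sum_comp, Fintype.sum_prod_type, Fin.sum_univ_succ,
      Finset.prod_range_succ]
    have h0 : ∑ τ : Equiv.Perm (Fin n), Real.exp (cyc (Equiv.Perm.decomposeFin.symm (0, τ))) ≤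
        Real.exp 1 * ∑ τ : Equiv.Perm (Fin n), Real.exp (cyc τ) := by
      rw [Finset.mul_sum]
      refine Finset.sum_le_sum fun τ _ => ?_
      rw [← Real.exp_add, Real.exp_le_exp, add_comm]
      exact_mod_cast cyc_decomposeFin_zero τ
    have h1 : ∑ i : Fin n, ∑ τ : Equiv.Perm (Fin n),
        Real.exp (cyc (Equiv.Perm.decomposeFin.symm (i.succ, τ))) ≤
        n * ∑ τ : Equiv.Perm (Fin n), Real.exp (cyc τ) := by
      refine (Finset.sum_le_sum (g := fun _ => ∑ τ : Equiv.Perm (Fin n), Real.exp (cyc τ))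
        fun i _ => Finset.sum_le_sum fun τ _ => ?_).trans_eq (by simp)
      rw [Real.exp_le_exp]
      exact_mod_cast cyc_decomposeFin_succ i τ
    calc _ ≤ (∑ τ : Equiv.Perm (Fin n), Real.exp (cyc τ)) * (Real.exp 1 + n) := by linarith
      _ ≤ _ := by gcongr

lemma prod_le_factorial_mul_exp (n : ℕ) :
    ∏ i ∈ Finset.range n, (Real.exp 1 + i) ≤
      n.factorial * Real.exp ((Real.exp 1 - 1) * (harmonic n : ℝ)) := by
  induction n with
  | zero => simp
  | succ n ih =>
    have hn : (0 : ℝ) < n + 1 := by positivity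
    have key : Real.exp 1 + n ≤ (n + 1) * Real.exp ((Real.exp 1 - 1) * (n + 1 : ℝ)⁻¹) := by
      calc Real.exp 1 + n = (n + 1) * ((Real.exp 1 - 1) * (n + 1 : ℝ)⁻¹ + 1) := by
            field_simp; ring
        _ ≤ _ := by gcongr; exact Real.add_one_le_exp _
    rw [Finset.prod_range_succ, harmonic_succ, Nat.factorial_succ]
    push_cast
    rw [mul_add (Real.exp 1 - 1), Real.exp_add]
    calc _ ≤ (n.factorial * Real.exp ((Real.exp 1 - 1) * (harmonic n : ℝ))) *
          ((n + 1) * Real.exp ((Real.exp 1 - 1) * (n + 1 : ℝ)⁻¹)) := by gcongr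
      _ = _ := by ring

/-- The number of permutations of an `n`-element set with more than
`⌈e·(ln n + 1)⌉` cycles is strictly less than `(n-1)! = n!/n`; equivalently,
the probability that a uniformly random permutation has more than
`⌈e·(ln n + 1)⌉` cycles is less than `1/n`. -/
theorem count_perms_many_cycles_lt (n : ℕ) (hn : 2 ≤ n) :
    (Finset.univ.filter fun π : Equiv.Perm (Fin n) =>
        ⌈Real.exp 1 * (Real.log n + 1)⌉ < (cyc π : ℤ)).card
      < (n - 1).factorial := by
  set S := Finset.univ.filter fun π : Equiv.Perm (Fin n) =>
        ⌈Real.exp 1 * (Real.log n + 1)⌉ < (cyc π : ℤ) with hS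
  set L := Real.log n + 1 with hL
  have hn0 : (0 : ℝ) < n := by positivity
  have he : (1 : ℝ) < Real.exp 1 := Real.one_lt_exp_iff.2 one_pos
  have h1 : (S.card : ℝ) * Real.exp (Real.exp 1 * L) ≤
      ∑ π : Equiv.Perm (Fin n), Real.exp (cyc π) := by
    rw [← nsmul_eq_mul]
    refine (Finset.card_nsmul_le_sum S (fun π => Real.exp (cyc π)) _ fun π hπ => ?_).trans
      (Finset.sum_le_univ_sum_of_nonneg fun π => (Real.exp_pos _).le)
    have h := (Finset.mem_filter.1 hπ).2
    rw [Real.exp_le_exp]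
    exact_mod_cast Int.ceil_le.1 h.le
  have h2 : (S.card : ℝ) * Real.exp (Real.exp 1 * L) ≤
      n.factorial * Real.exp ((Real.exp 1 - 1) * L) := by
    refine (h1.trans (sum_exp_cyc_le n)).trans ((prod_le_factorial_mul_exp n).trans ?_)
    have := harmonic_le_one_add_log n
    gcongr
    · linarith
  have h3 : Real.exp (Real.exp 1 * L) =
      Real.exp ((Real.exp 1 - 1) * L) * (n * Real.exp 1) := by
    rw [show Real.exp 1 * L = (Real.exp 1 - 1) * L + L by ring, Real.exp_add, hL,
      Real.exp_add (Real.log n), Real.exp_log hn0]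
  have hf : (n.factorial : ℝ) = n * (n - 1).factorial := by
    exact_mod_cast (Nat.mul_factorial_pred (by omega)).symm
  rw [h3, hf] at h2
  have h4 : (S.card : ℝ) * Real.exp 1 ≤ (n - 1).factorial := by
    refine le_of_mul_le_mul_right ?_
      (mul_pos (Real.exp_pos ((Real.exp 1 - 1) * L)) hn0)
    linarith
  have hpos : (0 : ℝ) < (n - 1).factorial := by positivity
  have h5 : (S.card : ℝ) < (n - 1).factorial := by
    rcases S.card.eq_zero_or_pos with h | h
    · rwa [h, Nat.cast_zero]
    · have : (0 : ℝ) < S.card := by exact_mod_cast h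
      nlinarith
  exact_mod_cast h5
end
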